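/- Let Ψ be an immigration mechanism whose measure m satisfies ∫_𝕄 (z₁+z₂) m(dz) < ∞, let (P^γ_t)_{t≥0} be the corresponding transition probabilities with immigration, and let H be the moment matrix. Assume H₁₁H₂₂ − H₁₂H₂₁ > 0 and H₁₁ + H₂₂ < 0. Then there exist λ > 0 and ϑ > 0 such that for every t ≥ 0 and all x, y ∈ 𝕄 there exists a coupling Π of P^γ_t(x,·) and P^γ_t(y,·) with ∫_{𝕄×𝕄}(|u₁−v₁|+|u₂−v₂|) Π(du,dv) ≤ ϑ·|x−y|·e^{−λt}, where |x−y| is the Euclidean norm. -/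

import Mathlib

open MeasureTheory Filter Set

noncomputable section

/-- The state space `𝕄 = [0,∞) × ℕ`, as a subset of `ℝ²`. -/
def Mset : Set (ℝ × ℝ) := {z | 0 ≤ z.1 ∧ ∃ n : ℕ, z.2 = (n : ℝ)}

/-- The space `𝕄₋₁ = [0,∞) × (ℕ ∪ {-1})`, as a subset of `ℝ²`. -/
def Mm1set : Set (ℝ × ℝ) := {z | 0 ≤ z.1 ∧ ∃ n : ℤ, (-1 : ℤ) ≤ n ∧ z.2 = (n : ℝ)}

/-- The data of a branching mechanism `(Φ₁, Φ₂)` of a mixed state branching process. -/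
structure BranchingMechanism where
  a11 : ℝ
  a21 : ℝ
  alpha : ℝ
  a21_nonneg : 0 ≤ a21
  alpha_nonneg : 0 ≤ alpha
  n1 : Measure (ℝ × ℝ)
  n2 : Measure (ℝ × ℝ)
  n1_sigmaFinite : SigmaFinite n1
  n2_sigmaFinite : SigmaFinite n2
  /-- `n₁` is supported on `𝕄` -/
  n1_supp : n1 Msetᶜ = 0
  /-- `n₂` is supported on `𝕄₋₁` -/
  n2_supp : n2 Mm1setᶜ = 0
  /-- `n₁` does not charge the origin -/
  n1_zero : n1 {0} = 0
  /-- `n₂` does not charge the origin -/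
  n2_zero : n2 {0} = 0
  /-- `n₂([0,∞) × {-1}) < ∞` -/
  n2_neg1 : n2 {z : ℝ × ℝ | z.2 = -1} ≠ ⊤
  /-- `∫ (z₁ ∧ z₁² + z₂) n₁(dz) < ∞` -/
  n1_moment : ∫⁻ z, ENNReal.ofReal (min z.1 (z.1 ^ 2) + z.2) ∂n1 ≠ ⊤
  /-- `∫ (z₁ + |z₂|) n₂(dz) < ∞` -/
  n2_moment : ∫⁻ z, ENNReal.ofReal (z.1 + |z.2|) ∂n2 ≠ ⊤

/-- `Φ₁(λ) = -a₁₁λ₁ - αλ₁² - ∫ (e^{-⟨λ,z⟩} - 1 + λ₁z₁) n₁(dz)`. -/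
def mPhi1 (B : BranchingMechanism) (l : ℝ × ℝ) : ℝ :=
  -B.a11 * l.1 - B.alpha * l.1 ^ 2 -
    ∫ z, (Real.exp (-(l.1 * z.1 + l.2 * z.2)) - 1 + l.1 * z.1) ∂B.n1

/-- `Φ₂(λ) = a₂₁λ₁ + ∫ (1 - e^{-⟨λ,z⟩}) n₂(dz)`. -/
def mPhi2 (B : BranchingMechanism) (l : ℝ × ℝ) : ℝ :=
  B.a21 * l.1 + ∫ z, (1 - Real.exp (-(l.1 * z.1 + l.2 * z.2))) ∂B.n2


/-- `V : t ↦ V(t,λ)` is a continuous `[0,∞)²`-valued solution of the cumulant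
equations (3.8) with initial value `λ = l`. -/
def SolvesCumulant (B : BranchingMechanism) (l : ℝ × ℝ) (V : ℝ → ℝ × ℝ) : Prop :=
  ContinuousOn V (Ici 0) ∧
  (∀ t : ℝ, 0 ≤ t → 0 ≤ (V t).1 ∧ 0 ≤ (V t).2) ∧
  (∀ t : ℝ, 0 ≤ t →
    (V t).1 = l.1 + ∫ s in (0:ℝ)..t, mPhi1 B (V s) ∧
    (V t).2 = l.2 + ∫ s in (0:ℝ)..t, mPhi2 B (V s))

/-- `P` is the family of transition probabilities of the MSB-process with cumulant
`V`: each `P_t(x,·)` is a Borel probability measure on `𝕄` with Laplace transform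
`∫ e^{-⟨λ,y⟩} P_t(x,dy) = exp(-⟨x,V(t,λ)⟩)`. -/
def IsMSBTransition (V : ℝ → (ℝ × ℝ) → ℝ × ℝ)
    (P : ℝ → (ℝ × ℝ) → Measure (ℝ × ℝ)) : Prop :=
  ∀ t : ℝ, 0 ≤ t → ∀ x ∈ Mset,
    IsProbabilityMeasure (P t x) ∧ P t x Msetᶜ = 0 ∧
    ∀ l : ℝ × ℝ, 0 ≤ l.1 → 0 ≤ l.2 →
      ∫ y, Real.exp (-(l.1 * y.1 + l.2 * y.2)) ∂(P t x)
        = Real.exp (-(x.1 * (V t l).1 + x.2 * (V t l).2))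

/-- `π : t ↦ π(t,λ)` is a `[0,∞)²`-valued solution of the moment linear system
`dπ₁/dt = -a₁₁π₁ + π₂ ∫ z₂ n₁(dz)`,
`dπ₂/dt = a₂₁π₁ + ∫ (z₁π₁ + z₂π₂) n₂(dz)`, with `π(0,λ) = l`. -/
def SolvesMoment (B : BranchingMechanism) (l : ℝ × ℝ) (π : ℝ → ℝ × ℝ) : Prop :=
  π 0 = l ∧
  (∀ t : ℝ, 0 ≤ t → 0 ≤ (π t).1 ∧ 0 ≤ (π t).2) ∧
  (∀ t : ℝ, 0 ≤ t →
    HasDerivWithinAt (fun s => (π s).1)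
      (-B.a11 * (π t).1 + (π t).2 * ∫ z, z.2 ∂B.n1) (Ici 0) t ∧
    HasDerivWithinAt (fun s => (π s).2)
      (B.a21 * (π t).1 + ∫ z, (z.1 * (π t).1 + z.2 * (π t).2) ∂B.n2) (Ici 0) t)

/-- `Pc` is a coupling of the probability measures `μ` and `ν` on `ℝ²`. -/
def IsCoupling (Pc : Measure ((ℝ × ℝ) × (ℝ × ℝ))) (μ ν : Measure (ℝ × ℝ)) : Prop :=
  IsProbabilityMeasure Pc ∧ Pc.map Prod.fst = μ ∧ Pc.map Prod.snd = ν

/-- The immigration mechanism `Ψ(λ) = bλ₁ + ∫ (1 - e^{-⟨λ,z⟩}) m(dz)`. -/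
def mPsi (b : ℝ) (m : Measure (ℝ × ℝ)) (l : ℝ × ℝ) : ℝ :=
  b * l.1 + ∫ z, (1 - Real.exp (-(l.1 * z.1 + l.2 * z.2))) ∂m

/-- `m` is an admissible immigration measure: a σ-finite measure on `𝕄` not
charging the origin with `∫ (1∧z₁ + 1∧z₂) m(dz) < ∞`. -/
def IsImmigrationMeasure (m : Measure (ℝ × ℝ)) : Prop :=
  SigmaFinite m ∧ m Msetᶜ = 0 ∧ m {0} = 0 ∧
    ∫⁻ z, ENNReal.ofReal (min 1 z.1 + min 1 z.2) ∂m ≠ ⊤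

/-- `P` is the family of transition probabilities of the MSBI-process with
cumulant `V` and immigration mechanism `Ψ = mPsi b m`. -/
def IsMSBITransition (V : ℝ → (ℝ × ℝ) → ℝ × ℝ) (b : ℝ) (m : Measure (ℝ × ℝ))
    (P : ℝ → (ℝ × ℝ) → Measure (ℝ × ℝ)) : Prop :=
  ∀ t : ℝ, 0 ≤ t → ∀ x ∈ Mset,
    IsProbabilityMeasure (P t x) ∧ P t x Msetᶜ = 0 ∧
    ∀ l : ℝ × ℝ, 0 ≤ l.1 → 0 ≤ l.2 →
      ∫ y, Real.exp (-(l.1 * y.1 + l.2 * y.2)) ∂(P t x)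
        = Real.exp (-(x.1 * (V t l).1 + x.2 * (V t l).2)
            - ∫ s in (0:ℝ)..t, mPsi b m (V s l))

/-- Entries of the moment matrix `H`. -/
def H11 (B : BranchingMechanism) : ℝ := -B.a11
def H12 (B : BranchingMechanism) : ℝ := ∫ z, z.2 ∂B.n1
def H21 (B : BranchingMechanism) : ℝ := B.a21 + ∫ z, z.1 ∂B.n2
def H22 (B : BranchingMechanism) : ℝ := ∫ z, z.2 ∂B.n2

open scoped NNReal Topology unitInterval

/-!
By the branching property, `P t (x ∧ y)` is a common convolution factor of `P t x` and `P t y`; the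
remaining factors have Laplace transforms `e^{-⟨x - x ∧ y, V(t,·)⟩}` and `e^{-⟨y - x ∧ y, V(t,·)⟩}`.
Sharing the common factor and taking the remaining ones independent
gives a coupling whose cost is at most the sum of their first moments. These are controlled by
`V₁(t,l) + V₂(t,l) ≤ C e^{-κt} (l₁ + l₂)`, which follows from `Φ(l) ≤ H l` and a positive row
vector `p` with `p H ≤ -κ p`.

That the remaining factors are Laplace transforms at all is a statement about the cumulant alone:
`e^{-u V₁}` for `u ≥ 0` and `e^{-V₂}` are Laplace transforms because the cumulant flow is a limit
of Euler schemes for mechanisms with truncated jump measures, for which each small Euler step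
composes with Laplace transforms to Laplace transforms, and because, by compactness of `[0,∞]²`,
Laplace transforms of probability measures on `[0,∞]²` are closed under pointwise limits.
-/

/-- The kernel `q₁ ^ l₁ * q₂ ^ l₂` on `I × I`. Under `qᵢ = e^{-yᵢ}` it is `e^{-⟨l, y⟩}` on the
compact quadrant `[0,∞]²`, the coordinate `yᵢ = ∞` corresponding to `qᵢ = 0`. -/
def laplaceKernel (l : ℝ≥0 × ℝ≥0) (q : I × I) : ℝ :=
  (q.1 : ℝ) ^ (l.1 : ℝ) * (q.2 : ℝ) ^ (l.2 : ℝ)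

@[fun_prop]
lemma continuous_laplaceKernel (l : ℝ≥0 × ℝ≥0) : Continuous (laplaceKernel l) :=
  ((continuous_subtype_val.comp continuous_fst).rpow_const fun _ => Or.inr l.1.2).mul
    ((continuous_subtype_val.comp continuous_snd).rpow_const fun _ => Or.inr l.2.2)

lemma laplaceKernel_nonneg (l : ℝ≥0 × ℝ≥0) (q : I × I) : 0 ≤ laplaceKernel l q :=
  mul_nonneg (Real.rpow_nonneg q.1.2.1 _) (Real.rpow_nonneg q.2.2.1 _)

lemma laplaceKernel_le_one (l : ℝ≥0 × ℝ≥0) (q : I × I) : laplaceKernel l q ≤ 1 :=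
  mul_le_one₀ (Real.rpow_le_one q.1.2.1 q.1.2.2 l.1.2) (Real.rpow_nonneg q.2.2.1 _)
    (Real.rpow_le_one q.2.2.1 q.2.2.2 l.2.2)

lemma laplaceKernel_one (l : ℝ≥0 × ℝ≥0) : laplaceKernel l 1 = 1 := by
  simp [laplaceKernel]

lemma laplaceKernel_mul (l : ℝ≥0 × ℝ≥0) (q r : I × I) :
    laplaceKernel l (q * r) = laplaceKernel l q * laplaceKernel l r := by
  simp only [laplaceKernel, Prod.fst_mul, Prod.snd_mul, Icc.coe_mul]
  rw [Real.mul_rpow q.1.2.1 r.1.2.1, Real.mul_rpow q.2.2.1 r.2.2.1, mul_mul_mul_comm]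

lemma integrable_laplaceKernel (l : ℝ≥0 × ℝ≥0) (μ : Measure (I × I)) [IsFiniteMeasure μ] :
    Integrable (laplaceKernel l) μ :=
  .of_bound (continuous_laplaceKernel l).aestronglyMeasurable 1 <| .of_forall fun q => by
    simpa only [Real.norm_of_nonneg (laplaceKernel_nonneg l q)] using laplaceKernel_le_one l q

/-- `f` is the Laplace transform of a probability measure on `[0,∞]²` (see `laplaceKernel`). Mass at
infinity is allowed so that this class is closed under pointwise limits. -/
def IsLaplaceTransform (f : ℝ≥0 × ℝ≥0 → ℝ) : Prop :=
  ∃ μ : ProbabilityMeasure (I × I), ∀ l, f l = ∫ q, laplaceKernel l q ∂(μ : Measure (I × I))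

namespace IsLaplaceTransform

variable {f g : ℝ≥0 × ℝ≥0 → ℝ}

lemma nonneg (hf : IsLaplaceTransform f) (l : ℝ≥0 × ℝ≥0) : 0 ≤ f l := by
  obtain ⟨μ, hμ⟩ := hf
  exact hμ l ▸ integral_nonneg (laplaceKernel_nonneg l)

lemma le_one (hf : IsLaplaceTransform f) (l : ℝ≥0 × ℝ≥0) : f l ≤ 1 := by
  obtain ⟨μ, hμ⟩ := hf
  calc f l ≤ ∫ _, (1 : ℝ) ∂(μ : Measure (I × I)) :=
        hμ l ▸ integral_mono (integrable_laplaceKernel l _) (integrable_const _)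
          (laplaceKernel_le_one l)
    _ = 1 := by simp

protected lemma dirac (q : I × I) : IsLaplaceTransform fun l => laplaceKernel l q :=
  ⟨⟨Measure.dirac q, inferInstance⟩, fun l => by simp⟩

protected lemma one : IsLaplaceTransform fun _ => 1 := by
  simpa only [laplaceKernel_one] using IsLaplaceTransform.dirac 1

protected lemma mul (hf : IsLaplaceTransform f) (hg : IsLaplaceTransform g) :
    IsLaplaceTransform fun l => f l * g l := by
  obtain ⟨μ, hμ⟩ := hf
  obtain ⟨ν, hν⟩ := hg
  refine ⟨⟨(μ : Measure (I × I)) ∗ₘ ν, inferInstance⟩, fun l => ?_⟩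
  simp only [ProbabilityMeasure.coe_mk]
  rw [integral_mconv (integrable_laplaceKernel l _)]
  simp only [laplaceKernel_mul, integral_const_mul, integral_mul_const, hμ, hν]

protected lemma pow (hf : IsLaplaceTransform f) (n : ℕ) : IsLaplaceTransform fun l => f l ^ n := by
  induction n with
  | zero => simpa only [pow_zero] using IsLaplaceTransform.one
  | succ n ih => simpa only [pow_succ] using ih.mul hf

protected lemma sum {ι : Type*} {s : Finset ι} {p : ι → ℝ} {F : ι → ℝ≥0 × ℝ≥0 → ℝ}
    (hp : ∀ i ∈ s, 0 ≤ p i) (hs : ∑ i ∈ s, p i = 1) (hF : ∀ i, IsLaplaceTransform (F i)) :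
    IsLaplaceTransform fun l => ∑ i ∈ s, p i * F i l := by
  choose μ hμ using hF
  have hprob :
      IsProbabilityMeasure (∑ i ∈ s, ENNReal.ofReal (p i) • (μ i : Measure (I × I))) := by
    constructor
    simp only [Measure.finsetSum_apply, Measure.smul_apply, measure_univ, smul_eq_mul, mul_one]
    rw [← ENNReal.ofReal_sum_of_nonneg hp, hs, ENNReal.ofReal_one]
  refine ⟨⟨_, hprob⟩, fun l => ?_⟩
  simp only [ProbabilityMeasure.coe_mk]
  rw [integral_finsetSum_measure fun i _ =>
    (integrable_laplaceKernel l _).smul_measure ENNReal.ofReal_ne_top]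
  refine Finset.sum_congr rfl fun i hi => ?_
  rw [integral_smul_measure, ENNReal.toReal_ofReal (hp i hi), hμ, smul_eq_mul]

protected lemma convex (hf : IsLaplaceTransform f) (hg : IsLaplaceTransform g) {p : ℝ}
    (hp0 : 0 ≤ p) (hp1 : p ≤ 1) : IsLaplaceTransform fun l => (1 - p) * f l + p * g l := by
  have h := IsLaplaceTransform.sum (s := Finset.univ) (p := ![1 - p, p]) (F := ![f, g])
    (by simp [Fin.forall_fin_two, hp0, hp1]) (by simp) (by simp [Fin.forall_fin_two, hf, hg])
  simpa only [Fin.sum_univ_two, Matrix.cons_val_zero, Matrix.cons_val_one] using h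

-- Probability measures on the compact space `I × I` form a compact space.
protected lemma of_tendsto {F : ℕ → ℝ≥0 × ℝ≥0 → ℝ} (hF : ∀ n, IsLaplaceTransform (F n))
    (hlim : ∀ l, Tendsto (F · l) atTop (𝓝 (f l))) : IsLaplaceTransform f := by
  choose μ hμ using hF
  obtain ⟨ν, hν⟩ : ∃ ν, MapClusterPt ν atTop μ := exists_clusterPt_of_compactSpace _
  obtain ⟨U, hU, hUν⟩ := mapClusterPt_iff_ultrafilter.1 hν
  refine ⟨ν, fun l => tendsto_nhds_unique ((hlim l).mono_left hU) ?_⟩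
  simpa only [BoundedContinuousFunction.mkOfCompact_apply, ContinuousMap.coe_mk, ← hμ] using
    ProbabilityMeasure.tendsto_iff_forall_integral_tendsto.1 hUν
      (.mkOfCompact ⟨_, continuous_laplaceKernel l⟩)

-- The limit of `(1 - r / n + r / n * f) ^ n`.
lemma exp_neg_mul_one_sub (hf : IsLaplaceTransform f) {r : ℝ} (hr : 0 ≤ r) :
    IsLaplaceTransform fun l => Real.exp (-(r * (1 - f l))) := by
  obtain ⟨k, hk⟩ := exists_nat_ge r
  have hlim (l : ℝ≥0 × ℝ≥0) :
      Tendsto (fun n : ℕ => ((1 - r / (n + (k + 1) : ℕ)) * 1 + r / (n + (k + 1) : ℕ) * f l) ^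
        (n + (k + 1))) atTop (𝓝 (Real.exp (-(r * (1 - f l))))) := by
    refine ((tendsto_add_atTop_iff_nat (k + 1)).2
      (Real.tendsto_one_add_div_pow_exp (-(r * (1 - f l))))).congr fun n => ?_
    ring
  refine .of_tendsto (fun n => (IsLaplaceTransform.one.convex hf (by positivity) ?_).pow _) hlim
  rw [div_le_one (by positivity)]
  push_cast
  linarith [(Nat.cast_nonneg n : (0 : ℝ) ≤ n)]

section Integral

variable {Z : Type*} [MetricSpace Z] [MeasurableSpace Z] [OpensMeasurableSpace Z]
  {F : Z → ℝ≥0 × ℝ≥0 → ℝ}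

lemma integrable (ν : Measure Z) [IsFiniteMeasure ν] (hF : ∀ z, IsLaplaceTransform (F z))
    (hc : ∀ l, Continuous (F · l)) (l : ℝ≥0 × ℝ≥0) : Integrable (F · l) ν :=
  .of_bound (hc l).aestronglyMeasurable 1 <| .of_forall fun z => by
    simpa only [Real.norm_of_nonneg ((hF z).nonneg l)] using (hF z).le_one l

variable [SecondCountableTopology Z]

lemma integral_simpleFunc (ν : Measure Z) [IsProbabilityMeasure ν] (s : SimpleFunc Z Z)
    (hF : ∀ z, IsLaplaceTransform (F z)) (hc : ∀ l, Continuous (F · l)) :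
    IsLaplaceTransform fun l => ∫ z, F (s z) l ∂ν := by
  have hsum (l : ℝ≥0 × ℝ≥0) :
      ∫ z, F (s z) l ∂ν = ∑ a ∈ s.range, ν.real (s ⁻¹' {a}) * F a l := by
    have hmem : ∀ᵐ a ∂ν.map s, a ∈ s.range :=
      (ae_map_iff s.measurable.aemeasurable s.range.measurableSet).2 (.of_forall s.mem_range_self)
    rw [← integral_map s.measurable.aemeasurable (hc l).aestronglyMeasurable,
      ← Measure.restrict_eq_self_of_ae_mem hmem, setIntegral_finset _ .finset]
    simp only [map_measureReal_apply s.measurable (measurableSet_singleton _), smul_eq_mul]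
  simp_rw [hsum]
  refine .sum (fun _ _ => measureReal_nonneg) ?_ hF
  rw [sum_measureReal_preimage_singleton _ fun a _ => s.measurableSet_fiber a, SimpleFunc.coe_range,
    preimage_range, probReal_univ]

protected lemma integral (ν : Measure Z) [IsProbabilityMeasure ν]
    (hF : ∀ z, IsLaplaceTransform (F z)) (hc : ∀ l, Continuous (F · l)) :
    IsLaplaceTransform fun l => ∫ z, F z l ∂ν := by
  have : Nonempty Z := nonempty_of_isProbabilityMeasure ν
  let s : ℕ → SimpleFunc Z Z :=
    SimpleFunc.approxOn id measurable_id univ (Classical.arbitrary Z) (mem_univ _)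
  refine .of_tendsto (fun n => integral_simpleFunc ν (s n) hF hc) fun l => ?_
  refine tendsto_integral_of_dominated_convergence (fun _ => 1)
    (fun n => ((hc l).measurable.comp (s n).measurable).aestronglyMeasurable)
    (integrable_const _) (fun n => .of_forall fun z => ?_) (.of_forall fun z => ?_)
  · rw [Real.norm_of_nonneg ((hF _).nonneg l)]
    exact (hF _).le_one l
  · exact ((hc l).tendsto z).comp (SimpleFunc.tendsto_approxOn measurable_id (mem_univ _) (by simp))

lemma exists_integral_eq (ν : Measure Z) [IsFiniteMeasure ν]
    (hF : ∀ z, IsLaplaceTransform (F z)) (hc : ∀ l, Continuous (F · l)) :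
    ∃ g, IsLaplaceTransform g ∧ ∀ l, ∫ z, F z l ∂ν = ν.real univ * g l := by
  rcases eq_zero_or_neZero ν with rfl | _
  · exact ⟨_, .one, fun l => by simp⟩
  · exact ⟨fun l => ⨍ z, F z l ∂ν, .integral _ hF hc, fun l => (measure_smul_average ν _).symm⟩

lemma exp_neg_mul_integral_one_sub (ν : Measure Z) [IsFiniteMeasure ν]
    (hF : ∀ z, IsLaplaceTransform (F z)) (hc : ∀ l, Continuous (F · l)) {r : ℝ} (hr : 0 ≤ r) :
    IsLaplaceTransform fun l => Real.exp (-(r * ∫ z, (1 - F z l) ∂ν)) := by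
  obtain ⟨g, hg, hFg⟩ := exists_integral_eq ν hF hc
  convert hg.exp_neg_mul_one_sub (r := r * ν.real univ) (by positivity) using 4 with l
  rw [integral_sub (integrable_const _) (integrable ν hF hc l), hFg, integral_const, smul_eq_mul]
  ring

lemma add_mul_integral_sub (ν : Measure Z) [IsFiniteMeasure ν]
    (hF : ∀ z, IsLaplaceTransform (F z)) (hc : ∀ l, Continuous (F · l))
    (hf : IsLaplaceTransform f) {r : ℝ} (hr : 0 ≤ r) (hr1 : r * ν.real univ ≤ 1) :
    IsLaplaceTransform fun l => f l + r * ∫ z, (F z l - f l) ∂ν := by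
  obtain ⟨g, hg, hFg⟩ := exists_integral_eq ν hF hc
  convert hf.convex hg (p := r * ν.real univ) (by positivity) hr1 using 2 with l
  rw [integral_sub (integrable ν hF hc l) (integrable_const _), hFg, integral_const, smul_eq_mul]
  ring

end Integral

end IsLaplaceTransform

lemma ext_of_forall_mem_submonoid_integral_eq {E : Type*} [TopologicalSpace E] [PolishSpace E]
    [MeasurableSpace E] [BorelSpace E] {μ ν : Measure E} [IsFiniteMeasure μ] [IsFiniteMeasure ν]
    (S : Submonoid (BoundedContinuousFunction E ℝ))
    (hsep : ∀ x y, x ≠ y → ∃ e ∈ S, e x ≠ e y) (h : ∀ e ∈ S, ∫ x, e x ∂μ = ∫ x, e x ∂ν) :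
    μ = ν := by
  let A : StarSubalgebra ℝ (BoundedContinuousFunction E ℝ) :=
    { Algebra.adjoin ℝ (S : Set (BoundedContinuousFunction E ℝ)) with
      star_mem' := fun {a} ha => by rwa [show star a = a by ext; simp] }
  refine ext_of_forall_mem_subalgebra_integral_eq_of_polish (A := A) (fun x y hxy => ?_)
    fun a ha => ?_
  · obtain ⟨e, he, hexy⟩ := hsep x y hxy
    exact ⟨e, ⟨_, ⟨e, Algebra.subset_adjoin he, rfl⟩, rfl⟩, hexy⟩
  · replace ha : a ∈ Submodule.span ℝ (S : Set (BoundedContinuousFunction E ℝ)) := by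
      rwa [← Submonoid.closure_eq S, ← Algebra.adjoin_eq_span]
    induction ha using Submodule.span_induction with
    | mem e he => exact h e he
    | zero => simp
    | add e f _ _ he hf =>
      simp only [BoundedContinuousFunction.coe_add, Pi.add_apply]
      rw [integral_add (e.integrable _) (f.integrable _),
        integral_add (e.integrable _) (f.integrable _), he, hf]
    | smul c e _ he =>
      simp only [BoundedContinuousFunction.coe_smul, integral_smul, he]

/-- The Laplace transform `l ↦ ∫ e^{-⟨l, y⟩} μ(dy)` of a measure on the plane. -/
def laplaceTransform (μ : Measure (ℝ × ℝ)) (l : ℝ × ℝ) : ℝ :=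
  ∫ y, Real.exp (-(l.1 * y.1 + l.2 * y.2)) ∂μ

lemma ext_of_integral_exp_neg_nnreal {μ ν : Measure (ℝ≥0 × ℝ≥0)} [IsFiniteMeasure μ]
    [IsFiniteMeasure ν] (h : ∀ l : ℝ≥0 × ℝ≥0,
      ∫ y : ℝ≥0 × ℝ≥0, Real.exp (-(l.1 * y.1 + l.2 * y.2)) ∂μ =
        ∫ y : ℝ≥0 × ℝ≥0, Real.exp (-(l.1 * y.1 + l.2 * y.2)) ∂ν) : μ = ν := by
  let e (l : ℝ≥0 × ℝ≥0) : BoundedContinuousFunction (ℝ≥0 × ℝ≥0) ℝ :=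
    .ofNormedAddCommGroup (fun y => Real.exp (-(l.1 * y.1 + l.2 * y.2))) (by fun_prop) 1
      fun y => by
        rw [Real.norm_of_nonneg (Real.exp_pos _).le, Real.exp_le_one_iff, neg_nonpos]
        positivity
  have he (l y : ℝ≥0 × ℝ≥0) : e l y = Real.exp (-(l.1 * y.1 + l.2 * y.2)) := rfl
  let S : Submonoid (BoundedContinuousFunction (ℝ≥0 × ℝ≥0) ℝ) :=
    { carrier := range e
      one_mem' := ⟨0, by ext y; simp [he]⟩
      mul_mem' := by
        rintro _ _ ⟨l, rfl⟩ ⟨k, rfl⟩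
        refine ⟨l + k, ?_⟩
        ext y
        simp only [he, BoundedContinuousFunction.mul_apply, ← Real.exp_add, Prod.fst_add,
          Prod.snd_add, NNReal.coe_add]
        ring_nf }
  refine ext_of_forall_mem_submonoid_integral_eq S (fun x y hxy => ?_) ?_
  · by_cases hfst : x.1 = y.1
    · exact ⟨e (0, 1), ⟨_, rfl⟩, by simpa [he] using fun hsnd => hxy (Prod.ext hfst hsnd)⟩
    · exact ⟨e (1, 0), ⟨_, rfl⟩, by simpa [he] using hfst⟩
  · rintro _ ⟨l, rfl⟩
    exact h l

lemma ext_of_laplaceTransform {μ ν : Measure (ℝ × ℝ)} [IsFiniteMeasure μ] [IsFiniteMeasure ν]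
    (hμ : ∀ᵐ z ∂μ, 0 ≤ z) (hν : ∀ᵐ z ∂ν, 0 ≤ z)
    (h : ∀ l, 0 ≤ l → laplaceTransform μ l = laplaceTransform ν l) : μ = ν := by
  let p : ℝ × ℝ → ℝ≥0 × ℝ≥0 := Prod.map Real.toNNReal Real.toNNReal
  let c : ℝ≥0 × ℝ≥0 → ℝ × ℝ := Prod.map (↑) (↑)
  have hp : Measurable p := by fun_prop
  have hc : Measurable c := by fun_prop
  have hcp {z : ℝ × ℝ} (hz : 0 ≤ z) : c (p z) = z :=
    Prod.ext (Real.coe_toNNReal _ hz.1) (Real.coe_toNNReal _ hz.2)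
  have hmap {ρ : Measure (ℝ × ℝ)} (hρ : ∀ᵐ z ∂ρ, 0 ≤ z) : (ρ.map p).map c = ρ := by
    rw [Measure.map_map hc hp,
      Measure.map_congr (show c ∘ p =ᵐ[ρ] id from hρ.mono fun z hz => hcp hz), Measure.map_id]
  have hint {ρ : Measure (ℝ × ℝ)} (hρ : ∀ᵐ z ∂ρ, 0 ≤ z) (l : ℝ≥0 × ℝ≥0) :
      ∫ y, Real.exp (-(l.1 * y.1 + l.2 * y.2)) ∂ρ.map p = laplaceTransform ρ (c l) := by
    rw [integral_map hp.aemeasurable (by fun_prop)]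
    refine integral_congr_ae (hρ.mono fun z hz => ?_)
    obtain ⟨hz₁, hz₂⟩ : 0 ≤ z.1 ∧ 0 ≤ z.2 := hz
    simp [p, c, hz₁, hz₂]
  rw [← hmap hμ, ← hmap hν]
  congr 1
  refine ext_of_integral_exp_neg_nnreal fun l => ?_
  rw [hint hμ, hint hν]
  exact h (c l) ⟨l.1.2, l.2.2⟩

lemma laplaceTransform_conv (μ ν : Measure (ℝ × ℝ)) [SFinite μ] [SFinite ν] (l : ℝ × ℝ) :
    laplaceTransform (μ ∗ ν) l = laplaceTransform μ l * laplaceTransform ν l := by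
  simp only [laplaceTransform, Measure.conv]
  rw [integral_map (by fun_prop) (by fun_prop), ← integral_prod_mul]
  refine integral_congr_ae (.of_forall fun z => ?_)
  simp only [← Real.exp_add, Prod.fst_add, Prod.snd_add]
  ring_nf

namespace IsLaplaceTransform

variable {f : ℝ≥0 × ℝ≥0 → ℝ}

lemma laplaceKernel_eq_zero {l : ℝ≥0 × ℝ≥0} (hl : l.1 ≠ 0 ∧ l.2 ≠ 0) {q : I × I}
    (hq : ¬(0 < q.1 ∧ 0 < q.2)) : laplaceKernel l q = 0 := by
  simp only [unitInterval.pos_iff_ne_zero, not_and_or, not_not] at hq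
  rcases hq with hq | hq <;> simp [laplaceKernel, hq, hl]

lemma ae_pos_of_continuousAt {μ : ProbabilityMeasure (I × I)}
    (hμ : ContinuousAt (fun l => ∫ q, laplaceKernel l q ∂(μ : Measure (I × I))) 0) :
    ∀ᵐ q ∂(μ : Measure (I × I)), 0 < q.1 ∧ 0 < q.2 := by
  let S : Set (I × I) := Ioi 0 ×ˢ Ioi 0
  have hS : MeasurableSet S := measurableSet_Ioi.prod measurableSet_Ioi
  let l (n : ℕ) : ℝ≥0 × ℝ≥0 := (1 / ((n : ℝ≥0) + 1), 1 / ((n : ℝ≥0) + 1))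
  have hl : Tendsto l atTop (𝓝 0) :=
    tendsto_one_div_add_atTop_nhds_zero_nat.prodMk_nhds tendsto_one_div_add_atTop_nhds_zero_nat
  have hle (n : ℕ) : ∫ q, laplaceKernel (l n) q ∂(μ : Measure (I × I)) ≤
      (μ : Measure (I × I)).real S := by
    rw [← integral_indicator_one hS]
    refine integral_mono (integrable_laplaceKernel _ _) ((integrable_const 1).indicator hS)
      fun q => ?_
    by_cases hq : q ∈ S
    · exact (laplaceKernel_le_one _ q).trans_eq (indicator_of_mem hq (1 : I × I → ℝ)).symm
    · rw [indicator_of_notMem hq, laplaceKernel_eq_zero (by simp [l]) hq]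
  have hlim : Tendsto (fun n => ∫ q, laplaceKernel (l n) q ∂(μ : Measure (I × I))) atTop
      (𝓝 1) := by
    simpa [laplaceKernel, Function.comp_def] using hμ.tendsto.comp hl
  have hone : 1 ≤ (μ : Measure (I × I)).real S := le_of_tendsto' hlim hle
  exact (mem_ae_iff_prob_eq_one hS).2 <|
    (ENNReal.toReal_eq_one_iff _).1 (measureReal_le_one.antisymm hone)

lemma exists_measure (hf : IsLaplaceTransform f) (hcont : ContinuousAt f 0) :
    ∃ Q : Measure (ℝ × ℝ), IsProbabilityMeasure Q ∧ (∀ᵐ z ∂Q, 0 ≤ z) ∧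
      ∀ l : ℝ≥0 × ℝ≥0, laplaceTransform Q (l.1, l.2) = f l := by
  obtain ⟨μ, hμ⟩ := hf
  let p : I × I → ℝ × ℝ := fun q => (-Real.log q.1, -Real.log q.2)
  have hp : Measurable p := by fun_prop
  refine ⟨(μ : Measure (I × I)).map p, Measure.isProbabilityMeasure_map hp.aemeasurable, ?_,
    fun l => ?_⟩
  · refine (ae_map_iff hp.aemeasurable measurableSet_Ici).2 (.of_forall fun q => ⟨?_, ?_⟩)
    · exact neg_nonneg.2 (Real.log_nonpos q.1.2.1 q.1.2.2)
    · exact neg_nonneg.2 (Real.log_nonpos q.2.2.1 q.2.2.2)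
  · rw [laplaceTransform, integral_map hp.aemeasurable (by fun_prop), hμ]
    rw [funext hμ] at hcont
    refine integral_congr_ae ((ae_pos_of_continuousAt hcont).mono fun q hq => ?_)
    simp only [p, laplaceKernel]
    rw [Real.rpow_def_of_pos hq.1, Real.rpow_def_of_pos hq.2, ← Real.exp_add]
    ring_nf

end IsLaplaceTransform

section Euler

lemma le_exp_of_discrete_gronwall {a : ℕ → ℝ} (ha : ∀ j, 0 ≤ a j) {h A C : ℝ} (hh : 0 ≤ h)
    (hA : 0 ≤ A) (hC : 0 ≤ C) {n : ℕ} (hs : ∀ j < n, a (j + 1) ≤ (1 + h * A) * a j + h * C) :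
    a n ≤ (a 0 + n * h * C) * Real.exp (A * (n * h)) := by
  have key := discrete_gronwall (u := fun j => a (min j n)) (b := fun _ => h * C)
    (c := fun _ => h * A) (ha _) (fun j _ => ?_) (fun _ _ => by positivity)
    (fun _ _ => by positivity) n.zero_le
  · simpa [mul_assoc, mul_comm A] using key
  · rcases lt_or_ge j n with hj | hj
    · simpa only [min_eq_left hj.le, min_eq_left (Nat.succ_le_of_lt hj)] using hs j hj
    · simp only [min_eq_right hj, min_eq_right (hj.trans j.le_succ)]
      nlinarith [ha n, mul_nonneg hh hA, mul_nonneg hh hC, mul_nonneg (mul_nonneg hh hA) (ha n)]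

variable {E : Type*} [NormedAddCommGroup E]

lemma norm_le_of_lipschitzOnWith {F : Type*} [NormedAddCommGroup F] {G : E → F} {D : Set E}
    {K : ℝ≥0} (hG : LipschitzOnWith K G D) {x y : E} (hx : x ∈ D) (hy : y ∈ D) :
    ‖G x - G y‖ ≤ K * ‖x - y‖ := by
  simpa only [dist_eq_norm] using hG.dist_le_mul x hx y hy

variable [NormedSpace ℝ E]

/-- One step, of size `h`, of the explicit Euler scheme for the equation `x' = G x`. -/
def eulerStep (G : E → E) (h : ℝ) (x : E) : E := x + h • G x

variable {G G' : E → E} {D : Set E} {K : ℝ≥0} {U : ℝ → E} {M δ a h T : ℝ}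

lemma norm_sub_eulerStep_le (hG : LipschitzOnWith K G D) (hh : 0 ≤ h)
    (hUD : ∀ t ∈ Icc a (a + h), U t ∈ D) (hUc : ContinuousOn U (Icc a (a + h)))
    (hUd : ∀ t ∈ Ico a (a + h), HasDerivWithinAt U (G (U t)) (Ici t) t)
    (hM : ∀ t ∈ Icc a (a + h), ‖G (U t)‖ ≤ M) :
    ‖U (a + h) - eulerStep G h (U a)‖ ≤ K * M * h * h := by
  have ha : a ∈ Icc a (a + h) := ⟨le_rfl, by linarith⟩
  have hM0 : 0 ≤ M := (norm_nonneg _).trans (hM a ha)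
  have hlip : ∀ t ∈ Icc a (a + h), ‖U t - U a‖ ≤ M * (t - a) :=
    norm_image_sub_le_of_norm_deriv_right_le_segment hUc hUd
      fun t ht => hM t (Ico_subset_Icc_self ht)
  have hderiv : ∀ t ∈ Ico a (a + h), HasDerivWithinAt (fun t => U t - (t - a) • G (U a))
      (G (U t) - G (U a)) (Ici t) t := fun t ht => by
    simpa [Pi.sub_def] using (hUd t ht).sub
      (((hasDerivAt_id t).sub_const a).smul_const (G (U a))).hasDerivWithinAt
  have hbound : ∀ t ∈ Ico a (a + h), ‖G (U t) - G (U a)‖ ≤ K * (M * h) := fun t ht => by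
    have htI := Ico_subset_Icc_self ht
    calc ‖G (U t) - G (U a)‖ ≤ K * ‖U t - U a‖ :=
          norm_le_of_lipschitzOnWith hG (hUD t htI) (hUD a ha)
      _ ≤ K * (M * (t - a)) := by gcongr; exact hlip t htI
      _ ≤ K * (M * h) := by gcongr; linarith [ht.2]
  have key := norm_image_sub_le_of_norm_deriv_right_le_segment (by fun_prop) hderiv hbound (a + h)
    ⟨ha.2, le_rfl⟩
  calc ‖U (a + h) - eulerStep G h (U a)‖
      = ‖U (a + h) - (a + h - a) • G (U a) - (U a - (a - a) • G (U a))‖ := by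
        rw [eulerStep, add_sub_cancel_left, sub_self, zero_smul]; congr 1; abel
    _ ≤ K * (M * h) * (a + h - a) := key
    _ = K * M * h * h := by ring

lemma norm_eulerStep_sub_eulerStep_le (hG : LipschitzOnWith K G D) (hh : 0 ≤ h)
    (hδ : ∀ x ∈ D, ‖G' x - G x‖ ≤ δ) {x y : E} (hx : x ∈ D) (hy : y ∈ D) :
    ‖eulerStep G' h x - eulerStep G h y‖ ≤ (1 + h * K) * ‖x - y‖ + h * δ := by
  have hsplit : eulerStep G' h x - eulerStep G h y =
      (x - y) + h • (G x - G y) + h • (G' x - G x) := by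
    simp only [eulerStep, smul_sub]; abel
  calc ‖eulerStep G' h x - eulerStep G h y‖
      ≤ ‖x - y‖ + ‖h • (G x - G y)‖ + ‖h • (G' x - G x)‖ := hsplit ▸ norm_add₃_le
    _ = ‖x - y‖ + h * ‖G x - G y‖ + h * ‖G' x - G x‖ := by
        simp only [norm_smul, Real.norm_of_nonneg hh]
    _ ≤ ‖x - y‖ + h * (K * ‖x - y‖) + h * δ := by
        gcongr
        exacts [norm_le_of_lipschitzOnWith hG hx hy, hδ x hx]
    _ = (1 + h * K) * ‖x - y‖ + h * δ := by ring

lemma norm_iterate_eulerStep_sub_le (hG : LipschitzOnWith K G D) (hh : 0 ≤ h)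
    (hδ0 : 0 ≤ δ) (hδ : ∀ x ∈ D, ‖G' x - G x‖ ≤ δ) {n : ℕ}
    (hUD : MapsTo U (Icc 0 (n * h)) D) (hUc : ContinuousOn U (Icc 0 (n * h)))
    (hUd : ∀ t ∈ Ico 0 (n * h), HasDerivWithinAt U (G (U t)) (Ici t) t)
    (hM : ∀ t ∈ Icc 0 (n * h), ‖G (U t)‖ ≤ M)
    (hD : ∀ j < n, (eulerStep G' h)^[j] (U 0) ∈ D) :
    ‖(eulerStep G' h)^[n] (U 0) - U (n * h)‖ ≤
      n * h * (δ + K * M * h) * Real.exp (K * (n * h)) := by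
  have hM0 : 0 ≤ M := (norm_nonneg _).trans (hM 0 ⟨le_rfl, by positivity⟩)
  have key := le_exp_of_discrete_gronwall (a := fun j => ‖(eulerStep G' h)^[j] (U 0) - U (j * h)‖)
    (fun _ => norm_nonneg _) hh K.2 (C := δ + K * M * h) (by positivity) (n := n) fun j hj => ?_
  · simpa using key
  have hj0 : 0 ≤ (j : ℝ) * h := by positivity
  have hjn : (j : ℝ) * h + h ≤ n * h := by
    rw [← add_one_mul]; gcongr; exact_mod_cast hj
  have hstep : ((j + 1 : ℕ) : ℝ) * h = j * h + h := by push_cast; ring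
  have hsub : Icc ((j : ℝ) * h) (j * h + h) ⊆ Icc 0 (n * h) := Icc_subset_Icc hj0 hjn
  have hlocal := norm_sub_eulerStep_le hG hh (fun t ht => hUD (hsub ht)) (hUc.mono hsub)
    (fun t ht => hUd t (Ico_subset_Ico hj0 hjn ht)) fun t ht => hM t (hsub ht)
  have hstable := norm_eulerStep_sub_eulerStep_le hG hh hδ (hD j hj)
    (hUD (hsub ⟨le_rfl, by linarith⟩))
  rw [Function.iterate_succ_apply', hstep]
  calc ‖eulerStep G' h ((eulerStep G' h)^[j] (U 0)) - U (j * h + h)‖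
      ≤ ‖eulerStep G' h ((eulerStep G' h)^[j] (U 0)) - eulerStep G h (U (j * h))‖ +
          ‖eulerStep G h (U (j * h)) - U (j * h + h)‖ := norm_sub_le_norm_sub_add_norm_sub _ _ _
    _ ≤ (1 + h * K) * ‖(eulerStep G' h)^[j] (U 0) - U (j * h)‖ + h * δ + K * M * h * h :=
        add_le_add hstable (norm_sub_rev (U _) _ ▸ hlocal)
    _ = (1 + h * K) * ‖(eulerStep G' h)^[j] (U 0) - U (j * h)‖ + h * (δ + K * M * h) := by ring

theorem tendsto_iterate_eulerStep (hG : LipschitzOnWith K G D) {Gs : ℕ → E → E}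
    (hGs : TendstoUniformlyOn Gs G atTop D) (hT : 0 ≤ T) (hUD : MapsTo U (Icc 0 T) D)
    (hUc : ContinuousOn U (Icc 0 T))
    (hUd : ∀ t ∈ Ico 0 T, HasDerivWithinAt U (G (U t)) (Ici t) t) {n : ℕ → ℕ}
    (hn : Tendsto n atTop atTop)
    (hD : ∀ k, ∀ j < n k, (eulerStep (Gs k) (T / n k))^[j] (U 0) ∈ D) :
    Tendsto (fun k => (eulerStep (Gs k) (T / n k))^[n k] (U 0)) atTop (𝓝 (U T)) := by
  obtain ⟨M, hM⟩ := (isCompact_Icc.image_of_continuousOn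
    (hG.continuousOn.comp hUc hUD)).isBounded.exists_norm_le
  replace hM : ∀ t ∈ Icc 0 T, ‖G (U t)‖ ≤ M := fun t ht => hM _ (mem_image_of_mem _ ht)
  have hmesh : Tendsto (fun k => T / (n k : ℝ)) atTop (𝓝 0) :=
    tendsto_const_nhds.div_atTop (tendsto_natCast_atTop_atTop.comp hn)
  have herror : Tendsto (fun p : ℝ × ℝ => T * (p.1 + K * M * p.2) * Real.exp (K * T)) (𝓝 (0, 0))
      (𝓝 0) := by
    have hcont : Continuous fun p : ℝ × ℝ => T * (p.1 + K * M * p.2) * Real.exp (K * T) := by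
      fun_prop
    simpa using hcont.tendsto (0, 0)
  refine Metric.tendsto_nhds.2 fun ε hε => ?_
  obtain ⟨δ, hδ, hδ0⟩ := (((herror.eventually_lt_const hε).curry_nhds.filter_mono
    nhdsWithin_le_nhds).and (self_mem_nhdsWithin (s := Ioi 0))).exists
  filter_upwards [Metric.tendstoUniformlyOn_iff.1 hGs δ hδ0, hmesh.eventually hδ,
    hn.eventually_gt_atTop 0] with k hk hkε hk0
  have hkT : (n k : ℝ) * (T / n k) = T := mul_div_cancel₀ T (Nat.cast_ne_zero.2 hk0.ne')
  have key := norm_iterate_eulerStep_sub_le (h := T / n k) (n := n k) (M := M) hG (by positivity)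
    (le_of_lt hδ0) (fun x hx => by simpa only [dist_eq_norm'] using (hk x hx).le)
    (hkT.symm ▸ hUD) (hkT.symm ▸ hUc) (hkT.symm ▸ hUd) (hkT.symm ▸ hM) (hD k)
  rw [hkT] at key
  exact dist_eq_norm (E := E) _ _ ▸ key.trans_lt hkε

end Euler

section BranchingPair

/-- A pair `X = (v, w)` such that `e^{-θ v}`, for every `θ ≥ 0`, and `w` are Laplace transforms, as
functions of the Laplace variable. Then `e^{-θ v} w ^ n` is the Laplace transform of a population
started from mass `θ` of the first type and `n` independent particles of the second type. -/
structure IsBranchingPair (X : ℝ≥0 × ℝ≥0 → ℝ × ℝ) : Prop where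
  exp_neg : ∀ θ : ℝ, 0 ≤ θ → IsLaplaceTransform fun l => Real.exp (-(θ * (X l).1))
  snd : IsLaplaceTransform fun l => (X l).2

/-- The half strip `[0,∞) × [0,1]`, in which branching pairs take their values. -/
def halfStrip : Set (ℝ × ℝ) := Ici 0 ×ˢ Icc 0 1

/-- The kernel `e^{-z₁ v} w ^ z₂`, which is `e^{-⟨V, z⟩}` in the coordinates
`(v, w) = (V₁, e^{-V₂})`. -/
def jumpKernel (z : ℝ≥0 × ℕ) (x : ℝ × ℝ) : ℝ := Real.exp (-(z.1 * x.1)) * x.2 ^ z.2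

lemma continuous_jumpKernel (x : ℝ × ℝ) : Continuous fun z => jumpKernel z x := by
  have : Continuous fun z : ℝ≥0 × ℕ => x.2 ^ z.2 :=
    (continuous_of_discreteTopology (f := fun n : ℕ => x.2 ^ n)).comp continuous_snd
  unfold jumpKernel
  fun_prop

namespace IsBranchingPair

variable {X : ℝ≥0 × ℝ≥0 → ℝ × ℝ}

lemma mem_halfStrip (hX : IsBranchingPair X) (l : ℝ≥0 × ℝ≥0) : X l ∈ halfStrip := by
  refine ⟨?_, hX.snd.nonneg l, hX.snd.le_one l⟩
  simpa [Real.exp_le_one_iff] using (hX.exp_neg 1 zero_le_one).le_one l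

lemma isLaplaceTransform_jumpKernel (hX : IsBranchingPair X) (z : ℝ≥0 × ℕ) :
    IsLaplaceTransform fun l => jumpKernel z (X l) :=
  (hX.exp_neg z.1 z.1.2).mul (hX.snd.pow z.2)

protected lemma of_tendsto {Y : ℕ → ℝ≥0 × ℝ≥0 → ℝ × ℝ} (hY : ∀ n, IsBranchingPair (Y n))
    (hlim : ∀ l, Tendsto (Y · l) atTop (𝓝 (X l))) : IsBranchingPair X where
  exp_neg θ hθ := .of_tendsto (fun n => (hY n).exp_neg θ hθ) fun l =>
    ((show Continuous fun x : ℝ × ℝ => Real.exp (-(θ * x.1)) by fun_prop).tendsto _).comp (hlim l)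
  snd := .of_tendsto (fun n => (hY n).snd) fun l => (continuous_snd.tendsto _).comp (hlim l)

protected lemma midpoint {Y : ℝ≥0 × ℝ≥0 → ℝ × ℝ} (hX : IsBranchingPair X)
    (hY : IsBranchingPair Y) : IsBranchingPair fun l => (1 / 2 : ℝ) • X l + (1 / 2 : ℝ) • Y l where
  exp_neg θ hθ := by
    convert (hX.exp_neg (θ / 2) (by positivity)).mul (hY.exp_neg (θ / 2) (by positivity))
      using 2 with l
    rw [← Real.exp_add, Prod.fst_add, Prod.smul_fst, Prod.smul_fst, smul_eq_mul, smul_eq_mul]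
    ring_nf
  snd := by
    convert hX.snd.convex hY.snd (p := 1 / 2) (by norm_num) (by norm_num) using 2 with l
    norm_num [Prod.snd_add, Prod.smul_snd]

protected lemma initial : IsBranchingPair fun l => (↑l.1, Real.exp (-l.2)) where
  exp_neg θ hθ := by
    convert IsLaplaceTransform.dirac (⟨Real.exp (-θ), by simp [Real.exp_nonneg, hθ]⟩, 1)
      using 2 with l
    simp [laplaceKernel, ← Real.exp_mul]
  snd := by
    convert IsLaplaceTransform.dirac (1, ⟨Real.exp (-1), by simp [Real.exp_nonneg]⟩) using 2 with l
    simp [laplaceKernel, ← Real.exp_mul]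

end IsBranchingPair

/-- The explicit Euler scheme of `x' = G x` maps branching pairs to branching pairs, if its step is
small enough. -/
def PreservesBranchingPairs (G : ℝ × ℝ → ℝ × ℝ) : Prop :=
  ∀ᶠ h in 𝓝[≥] (0 : ℝ), ∀ X, IsBranchingPair X → IsBranchingPair fun l => eulerStep G h (X l)

lemma eventually_nonneg_and_mul_le_one (c : ℝ) : ∀ᶠ h in 𝓝[≥] (0 : ℝ), 0 ≤ h ∧ h * c ≤ 1 := by
  have hlim : Tendsto (fun h : ℝ => h * c) (𝓝 0) (𝓝 0) := by
    simpa using (continuous_mul_const c).tendsto 0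
  filter_upwards [self_mem_nhdsWithin,
    (hlim.eventually_le_const zero_lt_one).filter_mono nhdsWithin_le_nhds] with h hh hc
  exact ⟨hh, hc⟩

namespace PreservesBranchingPairs

variable {G G' : ℝ × ℝ → ℝ × ℝ}

lemma congr (hG : PreservesBranchingPairs G) (hGG' : EqOn G G' halfStrip) :
    PreservesBranchingPairs G' := by
  filter_upwards [hG] with h hh X hX
  simpa only [eulerStep, hGG' (hX.mem_halfStrip _)] using hh X hX

-- An Euler step for `G + G'` is the midpoint of Euler steps of doubled size for `G` and for `G'`.
protected lemma add (hG : PreservesBranchingPairs G) (hG' : PreservesBranchingPairs G') :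
    PreservesBranchingPairs (G + G') := by
  have hdouble : Tendsto (fun h : ℝ => 2 * h) (𝓝[≥] 0) (𝓝[≥] 0) := by
    refine tendsto_nhdsWithin_iff.2 ⟨?_, ?_⟩
    · simpa using ((continuous_const_mul (2 : ℝ)).tendsto 0).mono_left nhdsWithin_le_nhds
    · filter_upwards [self_mem_nhdsWithin] with h hh
      exact mul_nonneg zero_le_two (mem_Ici.1 hh)
  filter_upwards [hdouble.eventually hG, hdouble.eventually hG'] with h hh hh' X hX
  convert (hh X hX).midpoint (hh' X hX) using 2 with l
  simp only [eulerStep, Pi.add_apply]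
  module

lemma linear (c : ℝ) : PreservesBranchingPairs fun x => (-(c * x.1), 0) := by
  filter_upwards [eventually_nonneg_and_mul_le_one c] with h ⟨_, hc⟩ X hX
  refine ⟨fun θ hθ => ?_, by simpa [eulerStep] using hX.snd⟩
  convert hX.exp_neg (θ * (1 - h * c)) (mul_nonneg hθ (sub_nonneg.2 hc)) using 4 with l
  simp only [eulerStep, Prod.fst_add, Prod.smul_fst, smul_eq_mul]
  ring

lemma integral_one_sub_jumpKernel (ν : Measure (ℝ≥0 × ℕ)) [IsFiniteMeasure ν] :
    PreservesBranchingPairs fun x => (∫ z, (1 - jumpKernel z x) ∂ν, 0) := by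
  filter_upwards [self_mem_nhdsWithin] with h (hh : 0 ≤ h) X hX
  refine ⟨fun θ hθ => ?_, by simpa [eulerStep] using hX.snd⟩
  convert (hX.exp_neg θ hθ).mul (IsLaplaceTransform.exp_neg_mul_integral_one_sub ν
    hX.isLaplaceTransform_jumpKernel (fun l => continuous_jumpKernel (X l))
    (mul_nonneg hθ hh)) using 2 with l
  rw [← Real.exp_add]
  simp only [eulerStep, Prod.fst_add, Prod.smul_fst, smul_eq_mul]
  ring_nf

lemma integral_jumpKernel_sub (ν : Measure (ℝ≥0 × ℕ)) [IsFiniteMeasure ν] :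
    PreservesBranchingPairs fun x => (0, ∫ z, (jumpKernel z x - x.2) ∂ν) := by
  filter_upwards [eventually_nonneg_and_mul_le_one (ν.real univ)] with h ⟨hh, hν⟩ X hX
  refine ⟨fun θ hθ => by simpa [eulerStep] using hX.exp_neg θ hθ, ?_⟩
  simpa [eulerStep] using IsLaplaceTransform.add_mul_integral_sub ν
    hX.isLaplaceTransform_jumpKernel (fun l => continuous_jumpKernel (X l)) hX.snd hh hν

end PreservesBranchingPairs

end BranchingPair

section BranchingDrift

/-- The rectangle `[0,R] × [0,1]`. -/
def strip (R : ℝ≥0) : Set (ℝ × ℝ) := Icc 0 (R : ℝ) ×ˢ Icc 0 1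

lemma strip_subset_halfStrip (R : ℝ≥0) : strip R ⊆ halfStrip :=
  prod_mono_left Icc_subset_Ici_self

/-- A vector field on the half strip whose flow maps branching pairs to branching pairs: it is
locally Lipschitz and a locally uniform limit of vector fields with the same property for their
Euler schemes, subject to a common bound that prevents explosion of the first coordinate. -/
structure IsBranchingDrift (G : ℝ × ℝ → ℝ × ℝ) : Prop where
  exists_lipschitzOnWith : ∀ R, ∃ K, LipschitzOnWith K G (strip R)
  exists_approx : ∃ Gs : ℕ → ℝ × ℝ → ℝ × ℝ, (∀ k, PreservesBranchingPairs (Gs k)) ∧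
    (∀ R, TendstoUniformlyOn Gs G atTop (strip R)) ∧
    ∃ A, 0 ≤ A ∧ ∀ k, ∀ x ∈ halfStrip, (Gs k x).1 ≤ A * (x.1 + 1)

lemma IsBranchingPair.iterate_eulerStep {X : ℝ≥0 × ℝ≥0 → ℝ × ℝ} (hX : IsBranchingPair X)
    {G : ℝ × ℝ → ℝ × ℝ} {h : ℝ}
    (hG : ∀ X, IsBranchingPair X → IsBranchingPair fun l => eulerStep G h (X l)) :
    ∀ n, IsBranchingPair fun l => (eulerStep G h)^[n] (X l)
  | 0 => hX
  | n + 1 => by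
    simpa only [Function.iterate_succ_apply'] using hG _ (iterate_eulerStep hX hG n)

lemma fst_iterate_eulerStep_le {G : ℝ × ℝ → ℝ × ℝ} {A T : ℝ} (hA : 0 ≤ A)
    (hG : ∀ x ∈ halfStrip, (G x).1 ≤ A * (x.1 + 1)) (hT : 0 ≤ T) {n j : ℕ} (hj : j ≤ n)
    {x : ℝ × ℝ} (hx : ∀ i, (eulerStep G (T / n))^[i] x ∈ halfStrip) :
    ((eulerStep G (T / n))^[j] x).1 ≤ (x.1 + T * A) * Real.exp (A * T) := by
  have hh : 0 ≤ T / n := by positivity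
  have hjT : j * (T / n) ≤ T := by
    calc j * (T / n) ≤ n * (T / n) := by gcongr
      _ = T * (n / n) := mul_div_left_comm ..
      _ ≤ T := mul_le_of_le_one_right hT (div_self_le_one _)
  have hx0 : 0 ≤ x.1 := (hx 0).1
  calc ((eulerStep G (T / n))^[j] x).1
      ≤ (x.1 + j * (T / n) * A) * Real.exp (A * (j * (T / n))) :=
        le_exp_of_discrete_gronwall (a := fun i => ((eulerStep G (T / n))^[i] x).1)
          (fun i => (hx i).1) hh hA hA fun i _ => by
            have := mul_le_mul_of_nonneg_left (hG _ (hx i)) hh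
            simp only [Function.iterate_succ_apply', eulerStep, Prod.fst_add, Prod.smul_fst,
              smul_eq_mul] at this ⊢
            linarith
    _ ≤ _ := by gcongr

lemma exists_seq_tendsto_atTop_div_mem {p : ℕ → ℝ → Prop}
    (hp : ∀ k, ∀ᶠ h in 𝓝[≥] (0 : ℝ), p k h) {T : ℝ} (hT : 0 ≤ T) :
    ∃ n : ℕ → ℕ, Tendsto n atTop atTop ∧ ∀ k, p k (T / n k) := by
  have hlim : Tendsto (fun n : ℕ => T / (n : ℝ)) atTop (𝓝[≥] 0) :=
    tendsto_nhdsWithin_iff.2 ⟨tendsto_const_div_atTop_nhds_zero_nat T,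
      .of_forall fun n => div_nonneg hT n.cast_nonneg⟩
  choose n hn using fun k =>
    ((hlim.eventually (hp k)).and (eventually_ge_atTop k)).exists
  exact ⟨n, tendsto_atTop_mono (fun k => (hn k).2) tendsto_id, fun k => (hn k).1⟩

namespace IsBranchingDrift

variable {G G' : ℝ × ℝ → ℝ × ℝ}

protected lemma add (hG : IsBranchingDrift G) (hG' : IsBranchingDrift G') :
    IsBranchingDrift (G + G') where
  exists_lipschitzOnWith R := by
    obtain ⟨K, hK⟩ := hG.exists_lipschitzOnWith R
    obtain ⟨K', hK'⟩ := hG'.exists_lipschitzOnWith R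
    exact ⟨K + K', hK.add hK'⟩
  exists_approx := by
    obtain ⟨Gs, hpres, hlim, A, hA, hle⟩ := hG.exists_approx
    obtain ⟨Gs', hpres', hlim', A', hA', hle'⟩ := hG'.exists_approx
    refine ⟨fun k => Gs k + Gs' k, fun k => (hpres k).add (hpres' k),
      fun R => (hlim R).add (hlim' R), A + A', add_nonneg hA hA', fun k x hx => ?_⟩
    simpa only [Pi.add_apply, Prod.fst_add, add_mul] using add_le_add (hle k x hx) (hle' k x hx)

theorem isBranchingPair_flow (hG : IsBranchingDrift G) {U : ℝ≥0 × ℝ≥0 → ℝ → ℝ × ℝ}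
    (hU0 : IsBranchingPair fun l => U l 0) {T : ℝ} (hT : 0 ≤ T)
    (hU : ∀ l, MapsTo (U l) (Icc 0 T) halfStrip) (hUc : ∀ l, ContinuousOn (U l) (Icc 0 T))
    (hUd : ∀ l, ∀ t ∈ Ico 0 T, HasDerivWithinAt (U l) (G (U l t)) (Ici t) t) :
    IsBranchingPair fun l => U l T := by
  obtain ⟨Gs, hpres, hlim, A, hA, hle⟩ := hG.exists_approx
  obtain ⟨n, hn, hstep⟩ := exists_seq_tendsto_atTop_div_mem hpres hT
  have hEuler : ∀ k j, IsBranchingPair fun l => (eulerStep (Gs k) (T / n k))^[j] (U l 0) :=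
    fun k => hU0.iterate_eulerStep (hstep k)
  refine .of_tendsto (fun k => hEuler k (n k)) fun l => ?_
  obtain ⟨R, hR⟩ := (isCompact_Icc.image_of_continuousOn (hUc l)).isBounded.exists_norm_le
  set R' := (max R (((U l 0).1 + T * A) * Real.exp (A * T))).toNNReal
  obtain ⟨K, hK⟩ := hG.exists_lipschitzOnWith R'
  refine tendsto_iterate_eulerStep hK (hlim R') hT (fun t ht => ?_) (hUc l) (hUd l) hn
    fun k j hj => ?_
  · refine ⟨⟨(hU l ht).1, (le_max_of_le_left ?_).trans (Real.le_coe_toNNReal _)⟩, (hU l ht).2⟩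
    exact (Real.le_norm_self _).trans ((norm_fst_le _).trans (hR _ (mem_image_of_mem _ ht)))
  · have hmem := fun i => (hEuler k i).mem_halfStrip l
    refine ⟨⟨(hmem j).1, (le_max_of_le_right ?_).trans (Real.le_coe_toNNReal _)⟩, (hmem j).2⟩
    exact fst_iterate_eulerStep_le hA (hle k) hT hj.le hmem

end IsBranchingDrift

end BranchingDrift

section LipschitzKernel

lemma tendstoUniformlyOn_of_dist_le {X E : Type*} [PseudoMetricSpace E] {F : ℕ → X → E} {f : X → E}
    {s : Set X} {b : ℕ → ℝ} (hb : Tendsto b atTop (𝓝 0))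
    (hF : ∀ k, ∀ x ∈ s, dist (f x) (F k x) ≤ b k) : TendstoUniformlyOn F f atTop s := by
  refine Metric.tendstoUniformlyOn_iff.2 fun ε hε => ?_
  filter_upwards [hb.eventually_lt_const hε] with k hk x hx
  exact (hF k x hx).trans_lt hk

variable {Z E : Type*} [MeasurableSpace Z] [SeminormedAddCommGroup E]

/-- A kernel `F z x` that vanishes at the point `x₀` of `D` and is Lipschitz on `D` as a function of
`x`, with a constant proportional to the weight `g z`. -/
structure IsLipschitzKernel (F : Z → E → ℝ) (g : Z → ℝ≥0) (D : Set E) (x₀ : E) : Prop where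
  measurable : ∀ x, Measurable (F · x)
  mem : x₀ ∈ D
  apply_eq_zero : ∀ z, F z x₀ = 0
  exists_lipschitzOnWith : ∃ c : ℝ≥0, ∀ z, LipschitzOnWith (c * g z) (F z) D

namespace IsLipschitzKernel

variable {F : Z → E → ℝ} {g : Z → ℝ≥0} {D : Set E} {x₀ : E} {N : Measure Z}

lemma exists_abs_le (hF : IsLipschitzKernel F g D x₀) :
    ∃ c : ℝ≥0, ∀ z, ∀ x ∈ D, |F z x| ≤ c * ‖x - x₀‖ * g z := by
  obtain ⟨c, hc⟩ := hF.exists_lipschitzOnWith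
  refine ⟨c, fun z x hx => ?_⟩
  simpa [dist_eq_norm, hF.apply_eq_zero, mul_right_comm] using (hc z).dist_le_mul x hx x₀ hF.mem

lemma integrable (hF : IsLipschitzKernel F g D x₀) (hg : Integrable (fun z => (g z : ℝ)) N)
    {x : E} (hx : x ∈ D) : Integrable (F · x) N := by
  obtain ⟨c, hc⟩ := hF.exists_abs_le
  exact (hg.const_mul (c * ‖x - x₀‖)).mono' (hF.measurable x).aestronglyMeasurable
    (.of_forall fun z => hc z x hx)

lemma exists_lipschitzOnWith_integral (hF : IsLipschitzKernel F g D x₀)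
    (hg : Integrable (fun z => (g z : ℝ)) N) :
    ∃ K, LipschitzOnWith K (fun x => ∫ z, F z x ∂N) D := by
  obtain ⟨c, hc⟩ := hF.exists_lipschitzOnWith
  refine ⟨c * (∫ z, (g z : ℝ) ∂N).toNNReal, .of_dist_le_mul fun x hx y hy => ?_⟩
  rw [dist_eq_norm, ← integral_sub (hF.integrable hg hx) (hF.integrable hg hy), NNReal.coe_mul,
    Real.coe_toNNReal _ (integral_nonneg fun z => (g z).coe_nonneg), ← integral_const_mul,
    ← integral_mul_const]
  exact norm_integral_le_of_norm_le ((hg.const_mul _).mul_const _)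
    (.of_forall fun z => (hc z).dist_le_mul x hx y hy)

lemma tendstoUniformlyOn_setIntegral (hF : IsLipschitzKernel F g D x₀) (hgm : Measurable g)
    (hg : Integrable (fun z => (g z : ℝ)) N) (hD : Bornology.IsBounded D) :
    TendstoUniformlyOn (fun (k : ℕ) x => ∫ z in {z | 1 / ((k : ℝ) + 1) ≤ g z}, F z x ∂N)
      (fun x => ∫ z, F z x ∂N) atTop D := by
  obtain ⟨c, hc⟩ := hF.exists_abs_le
  obtain ⟨M, hM⟩ := hD.exists_norm_le
  set S : ℕ → Set Z := fun k => {z | 1 / ((k : ℝ) + 1) ≤ g z}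
  have hS : ∀ k, MeasurableSet (S k) := fun k =>
    measurableSet_le measurable_const hgm.coe_nnreal_real
  have hSmono : Monotone S := fun j k hjk z hz =>
    (one_div_le_one_div_of_le (by positivity : (0 : ℝ) < j + 1) (by gcongr)).trans hz
  have hSunion : ⋃ k, S k = Function.support fun z => (g z : ℝ) := by
    ext z
    refine mem_iUnion.trans ⟨fun ⟨k, hk⟩ => (Nat.one_div_pos_of_nat.trans_le hk).ne', fun hz => ?_⟩
    exact (exists_nat_one_div_lt ((g z).coe_nonneg.lt_of_ne' hz)).imp fun k hk => hk.le
  have hlim : Tendsto (fun k => c * (M + M) * ∫ z in (S k)ᶜ, (g z : ℝ) ∂N) atTop (𝓝 0) := by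
    have hmono := tendsto_setIntegral_of_monotone hS hSmono hg.integrableOn
    rw [hSunion, setIntegral_support] at hmono
    simpa [setIntegral_compl (hS _) hg] using
      (hmono.const_sub (∫ z, (g z : ℝ) ∂N)).const_mul (c * (M + M))
  refine tendstoUniformlyOn_of_dist_le hlim fun k x hx => ?_
  rw [dist_eq_norm, ← setIntegral_compl (hS k) (hF.integrable hg hx), ← integral_const_mul]
  refine norm_integral_le_of_norm_le (hg.integrableOn.const_mul _) (.of_forall fun z => ?_)
  refine (hc z x hx).trans ?_
  gcongr
  exact (norm_sub_le _ _).trans (add_le_add (hM x hx) (hM x₀ hF.mem))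

end IsLipschitzKernel

end LipschitzKernel

section JumpKernels

/-- The integrand of `-Φ₁`, in the coordinates `(v, w) = (V₁, e^{-V₂})`. -/
def massKernel (z : ℝ≥0 × ℕ) (x : ℝ × ℝ) : ℝ := jumpKernel z x - 1 + z.1 * x.1

/-- The integrand of `-e^{-V₂} Φ₂`, in the coordinates `(v, w) = (V₁, e^{-V₂})`. The number `z.2` of
offspring of a particle is the jump of the number of particles increased by one. -/
def particleKernel (z : ℝ≥0 × ℕ) (x : ℝ × ℝ) : ℝ := jumpKernel z x - x.2

/-- The weight `z₁ ∧ z₁² + z₂` whose integrability is required of `n₁`. -/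
def massWeight (z : ℝ≥0 × ℕ) : ℝ≥0 := min z.1 (z.1 ^ 2) + z.2

/-- The weight `z₁ + |z₂ - 1|` whose integrability is required of `n₂`, in terms of the number `z₂`
of offspring. -/
def particleWeight (z : ℝ≥0 × ℕ) : ℝ≥0 := z.1 + ‖(z.2 : ℝ) - 1‖₊

variable {z : ℝ≥0 × ℕ} {x : ℝ × ℝ}

lemma measurable_massWeight : Measurable massWeight := by
  unfold massWeight
  fun_prop

lemma measurable_particleWeight : Measurable particleWeight := by
  unfold particleWeight
  fun_prop

lemma measurable_massKernel (x : ℝ × ℝ) : Measurable fun z => massKernel z x := by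
  have := (continuous_jumpKernel x).measurable
  unfold massKernel
  fun_prop

lemma measurable_particleKernel (x : ℝ × ℝ) : Measurable fun z => particleKernel z x :=
  (continuous_jumpKernel x).measurable.sub_const _

lemma jumpKernel_nonneg (hx : x ∈ halfStrip) : 0 ≤ jumpKernel z x :=
  mul_nonneg (Real.exp_pos _).le (pow_nonneg hx.2.1 _)

lemma exp_neg_mul_le_one (hx : x ∈ halfStrip) : Real.exp (-(z.1 * x.1)) ≤ 1 :=
  Real.exp_le_one_iff.2 (neg_nonpos.2 (mul_nonneg z.1.coe_nonneg hx.1))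

lemma jumpKernel_le_one (hx : x ∈ halfStrip) : jumpKernel z x ≤ 1 :=
  mul_le_one₀ (exp_neg_mul_le_one hx) (pow_nonneg hx.2.1 _) (pow_le_one₀ hx.2.1 hx.2.2)

lemma one_sub_jumpKernel_le (hx : x ∈ halfStrip) : 1 - jumpKernel z x ≤ z.1 * x.1 + z.2 := by
  rcases z with ⟨z, _ | n⟩
  · have := Real.one_sub_le_exp_neg (z * x.1)
    simp only [jumpKernel, pow_zero, mul_one, Nat.cast_zero, add_zero]
    linarith
  · have := jumpKernel_nonneg (z := (z, n + 1)) hx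
    have := mul_nonneg z.coe_nonneg hx.1
    have : (0 : ℝ) ≤ n := n.cast_nonneg
    push_cast
    linarith

lemma neg_massKernel_le (hx : x ∈ halfStrip) : -massKernel z x ≤ massWeight z := by
  have := one_sub_jumpKernel_le (z := z) hx
  have : (z.2 : ℝ) ≤ massWeight z := by exact_mod_cast le_add_self (a := (z.2 : ℝ≥0))
  simp only [massKernel]
  linarith

lemma hasFDerivAt_jumpKernel (z : ℝ≥0 × ℕ) (x : ℝ × ℝ) :
    HasFDerivAt (jumpKernel z)
      (-(z.1 * jumpKernel z x) • ContinuousLinearMap.fst ℝ ℝ ℝ +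
        (z.2 * x.2 ^ (z.2 - 1) * Real.exp (-(z.1 * x.1))) • ContinuousLinearMap.snd ℝ ℝ ℝ) x := by
  have hexp : HasFDerivAt (fun x : ℝ × ℝ => Real.exp (-(z.1 * x.1))) _ x :=
    ((hasFDerivAt_fst.const_mul (z.1 : ℝ)).neg).exp
  have hpow : HasFDerivAt (fun x : ℝ × ℝ => x.2 ^ z.2) _ x :=
    (hasFDerivAt_snd (𝕜 := ℝ) (E := ℝ) (F := ℝ)).pow z.2
  refine (hexp.mul hpow).congr_fderiv ?_
  ext <;> simp [jumpKernel] <;> ring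

lemma lipschitzOnWith_of_partial_le {f a b : ℝ × ℝ → ℝ} {D : Set (ℝ × ℝ)} (hD : Convex ℝ D)
    (hf : ∀ x ∈ D, HasFDerivAt f
      (a x • ContinuousLinearMap.fst ℝ ℝ ℝ + b x • ContinuousLinearMap.snd ℝ ℝ ℝ) x)
    {C : ℝ≥0} (hab : ∀ x ∈ D, |a x| + |b x| ≤ C) : LipschitzOnWith C f D := by
  refine hD.lipschitzOnWith_of_nnnorm_hasFDerivWithin_le
    (fun x hx => (hf x hx).hasFDerivWithinAt) fun x hx => ?_
  refine NNReal.coe_le_coe.1 ((norm_add_le _ _).trans (le_trans ?_ (hab x hx)))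
  simp only [norm_smul, Real.norm_eq_abs]
  exact add_le_add (mul_le_of_le_one_right (abs_nonneg _) (ContinuousLinearMap.norm_fst_le ℝ ℝ ℝ))
    (mul_le_of_le_one_right (abs_nonneg _) (ContinuousLinearMap.norm_snd_le ℝ ℝ ℝ))

variable {R : ℝ≥0}

lemma convex_strip (R : ℝ≥0) : Convex ℝ (strip R) := (convex_Icc 0 _).prod (convex_Icc 0 1)

lemma isCompact_strip (R : ℝ≥0) : IsCompact (strip R) := isCompact_Icc.prod isCompact_Icc

lemma zero_one_mem_strip (R : ℝ≥0) : ((0, 1) : ℝ × ℝ) ∈ strip R := by simp [strip]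

lemma mul_one_sub_jumpKernel_le (hx : x ∈ strip R) :
    z.1 * (1 - jumpKernel z x) ≤ (1 + R) * massWeight z := by
  have hx' := strip_subset_halfStrip R hx
  have hz1 : (0 : ℝ) ≤ z.1 := z.1.coe_nonneg
  have hz2 : (0 : ℝ) ≤ z.2 := z.2.cast_nonneg
  have hR : (0 : ℝ) ≤ R := R.coe_nonneg
  have hJ0 := jumpKernel_nonneg (z := z) hx'
  have hJ := one_sub_jumpKernel_le (z := z) hx'
  have hxR : z.1 * x.1 ≤ z.1 * R := mul_le_mul_of_nonneg_left hx.1.2 hz1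
  simp only [massWeight, NNReal.coe_add, NNReal.coe_min, NNReal.coe_pow, NNReal.coe_natCast]
  rcases le_total (z.1 : ℝ) (z.1 ^ 2) with h | h
  · rw [min_eq_left h]
    nlinarith [mul_nonneg hz1 hJ0, mul_nonneg hR (add_nonneg hz1 hz2)]
  · rw [min_eq_right h]
    have hz : (z.1 : ℝ) ≤ 1 := by nlinarith
    nlinarith [mul_le_mul_of_nonneg_left (hJ.trans (add_le_add_left hxR _)) hz1,
      mul_le_mul_of_nonneg_right hz hz2, mul_nonneg hR hz2, sq_nonneg (z.1 : ℝ)]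

lemma nat_mul_pow_mul_exp_le (hx : x ∈ halfStrip) :
    z.2 * x.2 ^ (z.2 - 1) * Real.exp (-(z.1 * x.1)) ≤ z.2 :=
  (mul_le_of_le_one_right (mul_nonneg z.2.cast_nonneg (pow_nonneg hx.2.1 _))
    (exp_neg_mul_le_one hx)).trans
    (mul_le_of_le_one_right z.2.cast_nonneg (pow_le_one₀ hx.2.1 hx.2.2))

lemma nat_mul_pow_mul_exp_nonneg (hx : x ∈ halfStrip) :
    0 ≤ z.2 * x.2 ^ (z.2 - 1) * Real.exp (-(z.1 * x.1)) :=
  mul_nonneg (mul_nonneg z.2.cast_nonneg (pow_nonneg hx.2.1 _)) (Real.exp_pos _).le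

lemma abs_nat_mul_pow_mul_exp_sub_one_le (hx : x ∈ halfStrip) :
    |z.2 * x.2 ^ (z.2 - 1) * Real.exp (-(z.1 * x.1)) - 1| ≤ |(z.2 : ℝ) - 1| + z.1 * x.1 := by
  have hnonneg := nat_mul_pow_mul_exp_nonneg (z := z) hx
  have hle := nat_mul_pow_mul_exp_le (z := z) hx
  have hzx : 0 ≤ z.1 * x.1 := mul_nonneg z.1.coe_nonneg hx.1
  rcases z with ⟨z, _ | _ | n⟩
  · simpa using hzx
  · have := Real.one_sub_le_exp_neg (z * x.1)
    simp only [zero_add, Nat.cast_one, sub_self, abs_zero, tsub_self, pow_zero, one_mul] at hle ⊢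
    rw [abs_of_nonpos (sub_nonpos.2 hle)]
    linarith
  · have : (0 : ℝ) ≤ n := n.cast_nonneg
    push_cast at hle hnonneg ⊢
    rw [abs_of_nonneg (by linarith : (0 : ℝ) ≤ n + 1 + 1 - 1)]
    refine abs_le.2 ⟨?_, ?_⟩ <;> linarith

lemma isLipschitzKernel_massKernel (R : ℝ≥0) :
    IsLipschitzKernel massKernel massWeight (strip R) (0, 1) where
  measurable := measurable_massKernel
  mem := zero_one_mem_strip R
  apply_eq_zero z := by simp [massKernel, jumpKernel]
  exists_lipschitzOnWith := by
    refine ⟨2 + R, fun z => lipschitzOnWith_of_partial_le (convex_strip R)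
      (a := fun x => z.1 * (1 - jumpKernel z x))
      (b := fun x => z.2 * x.2 ^ (z.2 - 1) * Real.exp (-(z.1 * x.1))) (fun x _ => ?_)
      fun x hx => ?_⟩
    · refine (((hasFDerivAt_jumpKernel z x).sub_const 1).add
        (hasFDerivAt_fst.const_mul (z.1 : ℝ))).congr_fderiv ?_
      ext <;> simp
      ring
    · have hx' := strip_subset_halfStrip R hx
      rw [abs_of_nonneg (mul_nonneg z.1.coe_nonneg (sub_nonneg.2 (jumpKernel_le_one hx'))),
        abs_of_nonneg (nat_mul_pow_mul_exp_nonneg hx')]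
      have hz : (z.2 : ℝ) ≤ massWeight z := by exact_mod_cast le_add_self (a := (z.2 : ℝ≥0))
      push_cast
      linarith [mul_one_sub_jumpKernel_le (z := z) hx, nat_mul_pow_mul_exp_le (z := z) hx']

lemma isLipschitzKernel_particleKernel (R : ℝ≥0) :
    IsLipschitzKernel particleKernel particleWeight (strip R) (0, 1) where
  measurable := measurable_particleKernel
  mem := zero_one_mem_strip R
  apply_eq_zero z := by simp [particleKernel, jumpKernel]
  exists_lipschitzOnWith := by
    refine ⟨1 + R, fun z => lipschitzOnWith_of_partial_le (convex_strip R)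
      (a := fun x => -(z.1 * jumpKernel z x))
      (b := fun x => z.2 * x.2 ^ (z.2 - 1) * Real.exp (-(z.1 * x.1)) - 1) (fun x _ => ?_)
      fun x hx => ?_⟩
    · refine ((hasFDerivAt_jumpKernel z x).sub
        (hasFDerivAt_snd (𝕜 := ℝ) (E := ℝ) (F := ℝ))).congr_fderiv ?_
      ext <;> simp
    · have hx' := strip_subset_halfStrip R hx
      have hz : (0 : ℝ) ≤ z.1 := z.1.coe_nonneg
      have ha : z.1 * jumpKernel z x ≤ z.1 := mul_le_of_le_one_right hz (jumpKernel_le_one hx')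
      have hb := abs_nat_mul_pow_mul_exp_sub_one_le (z := z) hx'
      have hR : z.1 * x.1 ≤ z.1 * R := mul_le_mul_of_nonneg_left hx.1.2 hz
      have := mul_nonneg R.coe_nonneg (abs_nonneg ((z.2 : ℝ) - 1))
      rw [abs_neg, abs_of_nonneg (mul_nonneg hz (jumpKernel_nonneg hx'))]
      simp only [particleWeight, NNReal.coe_mul, NNReal.coe_add, NNReal.coe_one, coe_nnnorm,
        Real.norm_eq_abs]
      linarith

end JumpKernels

section ElementaryDrifts

variable {f : ℝ × ℝ → ℝ} {ν : ℕ → Measure (ℝ≥0 × ℕ)} {N : Measure (ℝ≥0 × ℕ)}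

lemma PreservesBranchingPairs.neg_integral_massKernel (ν : Measure (ℝ≥0 × ℕ)) [IsFiniteMeasure ν]
    (hν : Integrable (fun z => (massWeight z : ℝ)) ν) :
    PreservesBranchingPairs fun x => (-∫ z, massKernel z x ∂ν, 0) := by
  have hfst : Integrable (fun z : ℝ≥0 × ℕ => (z.1 : ℝ)) ν := by
    refine (hν.add (integrable_const 1)).mono' (by fun_prop) (.of_forall fun z => ?_)
    have hz : z.1 ≤ massWeight z + 1 := by
      rcases le_total z.1 1 with h | h
      · exact h.trans le_add_self
      · rw [massWeight, min_eq_left (le_self_pow₀ h two_ne_zero), add_assoc]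
        exact le_self_add
    simpa using (by exact_mod_cast hz : (z.1 : ℝ) ≤ massWeight z + 1)
  refine ((integral_one_sub_jumpKernel ν).add (linear (∫ z, (z.1 : ℝ) ∂ν))).congr fun x hx => ?_
  have hJ : Integrable (fun z => 1 - jumpKernel z x) ν := by
    refine (integrable_const (1 : ℝ)).mono'
      (continuous_const.sub (continuous_jumpKernel x)).aestronglyMeasurable (.of_forall fun z => ?_)
    rw [Real.norm_of_nonneg (sub_nonneg.2 (jumpKernel_le_one hx))]
    exact sub_le_self _ (jumpKernel_nonneg hx)
  have hsum : ∀ z, massKernel z x = z.1 * x.1 - (1 - jumpKernel z x) := fun z => by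
    rw [massKernel]
    ring
  simp only [Pi.add_apply, Prod.mk_add_mk, add_zero, hsum, integral_sub (hfst.mul_const x.1) hJ,
    integral_mul_const]
  ring_nf

lemma tendsto_const_mul_one_div_add_atTop_nhds_zero_nat (c : ℝ) :
    Tendsto (fun k : ℕ => c * (1 / ((k : ℝ) + 1))) atTop (𝓝 0) := by
  simpa using (tendsto_one_div_add_atTop_nhds_zero_nat (𝕜 := ℝ)).const_mul c

lemma abs_exp_neg_div_sub_sum_le {v R : ℝ} (hv : 0 ≤ v) (hR : v ≤ R) (k n : ℕ) :
    |Real.exp (-(v / (k + 1))) - ∑ m ∈ Finset.range n, (-(v / (k + 1))) ^ m / m.factorial| ≤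
      R ^ n * Real.exp R / (k + 1) ^ n := by
  have hk : v / (k + 1) ≤ v := div_le_self hv (by simp)
  have hexp : |Real.exp (-(v / (k + 1))) - ∑ m ∈ Finset.range n, (-(v / (k + 1))) ^ m / m.factorial|
      ≤ |-(v / (k + 1))| ^ n * Real.exp |-(v / (k + 1))| := by
    exact_mod_cast Complex.norm_exp_sub_sum_le_norm_mul_exp (-(v / (k + 1)) : ℝ) n
  calc _ ≤ |-(v / (k + 1))| ^ n * Real.exp |-(v / (k + 1))| := hexp
    _ = v ^ n * Real.exp (v / (k + 1)) / (k + 1) ^ n := by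
      rw [abs_neg, abs_of_nonneg (by positivity), div_pow, div_mul_eq_mul_div]
    _ ≤ R ^ n * Real.exp R / (k + 1) ^ n := by
      have hR0 := hv.trans hR
      have := hk.trans hR
      gcongr

namespace IsBranchingDrift

lemma of_tendsto_massKernel [∀ k, IsFiniteMeasure (ν k)] {A : ℝ}
    (hν : ∀ k, Integrable (fun z => (massWeight z : ℝ)) (ν k))
    (hA : ∀ k, ∫ z, (massWeight z : ℝ) ∂ν k ≤ A) (hf : ∀ R, ∃ K, LipschitzOnWith K f (strip R))
    (hlim : ∀ R,
      TendstoUniformlyOn (fun k x => ∫ z, massKernel z x ∂ν k) (fun x => -f x) atTop (strip R)) :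
    IsBranchingDrift fun x => (f x, 0) where
  exists_lipschitzOnWith R :=
    (hf R).imp' (1 * ·) fun _ hK => (LipschitzWith.prodMk_right (0 : ℝ)).comp_lipschitzOnWith hK
  exists_approx := by
    have hA0 : 0 ≤ A := (integral_nonneg fun z => (massWeight z).coe_nonneg).trans (hA 0)
    refine ⟨fun k x => (-∫ z, massKernel z x ∂ν k, 0), fun k => .neg_integral_massKernel _ (hν k),
      fun R => ?_, A, hA0, fun k x hx => ?_⟩
    · have hneg := (hlim R).neg
      simp only [Pi.neg_def, neg_neg] at hneg
      exact (LipschitzWith.prodMk_right (0 : ℝ)).uniformContinuous.comp_tendstoUniformlyOn hneg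
    · obtain ⟨R, hR⟩ : ∃ R : ℝ≥0, x ∈ strip R := ⟨⟨x.1, hx.1⟩, ⟨hx.1, le_rfl⟩, hx.2⟩
      calc -∫ z, massKernel z x ∂ν k = ∫ z, -massKernel z x ∂ν k := (integral_neg _).symm
        _ ≤ ∫ z, (massWeight z : ℝ) ∂ν k :=
          integral_mono ((isLipschitzKernel_massKernel R).integrable (hν k) hR).neg (hν k)
            fun z => neg_massKernel_le hx
        _ ≤ A := hA k
        _ ≤ A * (x.1 + 1) := le_mul_of_one_le_right hA0 (le_add_of_nonneg_left hx.1)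

lemma of_tendsto_particleKernel [∀ k, IsFiniteMeasure (ν k)]
    (hf : ∀ R, ∃ K, LipschitzOnWith K f (strip R))
    (hlim : ∀ R,
      TendstoUniformlyOn (fun k x => ∫ z, particleKernel z x ∂ν k) f atTop (strip R)) :
    IsBranchingDrift fun x => (0, f x) where
  exists_lipschitzOnWith R :=
    (hf R).imp' (1 * ·) fun _ hK => (LipschitzWith.prodMk_left (0 : ℝ)).comp_lipschitzOnWith hK
  exists_approx := ⟨fun k x => (0, ∫ z, particleKernel z x ∂ν k),
    fun _ => .integral_jumpKernel_sub _,
    fun R => (LipschitzWith.prodMk_left (0 : ℝ)).uniformContinuous.comp_tendstoUniformlyOn (hlim R),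
    0, le_rfl, fun _ _ _ => (zero_mul _).ge⟩

lemma linear (c : ℝ) : IsBranchingDrift fun x => (-(c * x.1), 0) where
  exists_lipschitzOnWith R :=
    (ContDiff.contDiffOn (n := 1) (by fun_prop)).exists_lipschitzOnWith one_ne_zero
      (convex_strip R) (isCompact_strip R)
  exists_approx := by
    refine ⟨fun _ x => (-(c * x.1), 0), fun _ => .linear c,
      fun R => tendstoUniformlyOn_of_dist_le (b := 0) tendsto_const_nhds (by simp), |c|,
      abs_nonneg c, fun _ x hx => ?_⟩
    have : -c * x.1 ≤ |c| * x.1 := mul_le_mul_of_nonneg_right (neg_le_abs c) hx.1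
    linarith [abs_nonneg c]

-- The jump rate `2 α n²` with jumps of size `1 / n`.
lemma quadratic (α : ℝ≥0) : IsBranchingDrift fun x => (-(α * x.1 ^ 2), 0) := by
  have hmin : ∀ k : ℕ, (massWeight ((k + 1 : ℝ≥0)⁻¹, 0) : ℝ) = ((k + 1 : ℝ) ^ 2)⁻¹ := fun k => by
    have : ((k + 1 : ℝ)⁻¹) ^ 2 ≤ (k + 1 : ℝ)⁻¹ :=
      pow_le_of_le_one (by positivity) (inv_le_one_of_one_le₀ (by simp)) two_ne_zero
    simpa [massWeight, inv_pow] using this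
  refine .of_tendsto_massKernel (A := 2 * α)
    (ν := fun k => (2 * α * (k + 1) ^ 2) • Measure.dirac ((k + 1 : ℝ≥0)⁻¹, 0))
    (fun k => (integrable_dirac (by simp)).smul_measure_nnreal) (fun k => ?_)
    (fun R => ?_) fun R => ?_
  · rw [integral_smul_nnreal_measure, integral_dirac, hmin, NNReal.smul_def]
    push_cast
    exact (mul_inv_cancel_right₀ (by positivity) _).le
  · exact (ContDiff.contDiffOn (n := 1) (by fun_prop)).exists_lipschitzOnWith one_ne_zero
      (convex_strip R) (isCompact_strip R)
  · refine tendstoUniformlyOn_of_dist_le (tendsto_const_mul_one_div_add_atTop_nhds_zero_nat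
      (2 * α * (R ^ 3 * Real.exp R))) fun k x hx => ?_
    have hexp := abs_exp_neg_div_sub_sum_le hx.1.1 hx.1.2 k 3
    set E := Real.exp (-(x.1 / (k + 1))) -
      ∑ m ∈ Finset.range 3, (-(x.1 / (k + 1))) ^ m / m.factorial
      with hE
    calc dist (- -(α * x.1 ^ 2)) (∫ z, massKernel z x ∂_)
        = |2 * α * (k + 1) ^ 2 * E| := by
          rw [integral_smul_nnreal_measure, integral_dirac, NNReal.smul_def, dist_comm,
            Real.dist_eq, hE]
          congr 1
          simp only [massKernel, jumpKernel, Finset.sum_range_succ, Finset.sum_range_zero,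
            Nat.factorial, smul_eq_mul]
          push_cast
          field_simp
          ring
      _ ≤ 2 * α * (k + 1) ^ 2 * (R ^ 3 * Real.exp R / (k + 1) ^ 3) := by
          rw [abs_mul, abs_of_nonneg (by positivity)]
          gcongr
      _ = 2 * α * (R ^ 3 * Real.exp R) * (1 / (k + 1)) := by field_simp

lemma neg_mul (a : ℝ≥0) : IsBranchingDrift fun x => (0, -(a * x.1 * x.2)) := by
  refine .of_tendsto_particleKernel
    (ν := fun k => (a * (k + 1)) • Measure.dirac ((k + 1 : ℝ≥0)⁻¹, 1))
    (fun R => ?_) fun R => ?_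
  · exact (ContDiff.contDiffOn (n := 1) (by fun_prop)).exists_lipschitzOnWith one_ne_zero
      (convex_strip R) (isCompact_strip R)
  · refine tendstoUniformlyOn_of_dist_le (tendsto_const_mul_one_div_add_atTop_nhds_zero_nat
      (a * (R ^ 2 * Real.exp R))) fun k x hx => ?_
    have hexp := abs_exp_neg_div_sub_sum_le hx.1.1 hx.1.2 k 2
    set E := Real.exp (-(x.1 / (k + 1))) -
      ∑ m ∈ Finset.range 2, (-(x.1 / (k + 1))) ^ m / m.factorial
      with hE
    calc dist (-(a * x.1 * x.2)) (∫ z, particleKernel z x ∂_)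
        = |a * (k + 1) * x.2 * E| := by
          rw [integral_smul_nnreal_measure, integral_dirac, NNReal.smul_def, dist_comm,
            Real.dist_eq, hE]
          congr 1
          simp only [particleKernel, jumpKernel, Finset.sum_range_succ, Finset.sum_range_zero,
            Nat.factorial, smul_eq_mul]
          push_cast
          field_simp
          ring
      _ ≤ a * (k + 1) * 1 * (R ^ 2 * Real.exp R / (k + 1) ^ 2) := by
          have hx2 : 0 ≤ x.2 := hx.2.1
          rw [abs_mul, abs_of_nonneg (by positivity)]
          gcongr
          exact hx.2.2
      _ = a * (R ^ 2 * Real.exp R) * (1 / (k + 1)) := by field_simp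

lemma neg_integral_massKernel (hN : Integrable (fun z => (massWeight z : ℝ)) N) :
    IsBranchingDrift fun x => (-∫ z, massKernel z x ∂N, 0) := by
  have hfin : ∀ k : ℕ, IsFiniteMeasure (N.restrict {z | 1 / ((k : ℝ) + 1) ≤ massWeight z}) :=
    fun k => ⟨by simpa using hN.measure_ge_lt_top Nat.one_div_pos_of_nat⟩
  refine .of_tendsto_massKernel
    (ν := fun k : ℕ => N.restrict {z | 1 / ((k : ℝ) + 1) ≤ massWeight z})
    (fun k => hN.integrableOn) (fun k => setIntegral_le_integral hN
    (.of_forall fun z => (massWeight z).coe_nonneg)) (fun R => ?_) fun R => ?_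
  · exact ((isLipschitzKernel_massKernel R).exists_lipschitzOnWith_integral hN).imp
      fun _ hK => hK.neg
  · simpa only [neg_neg] using (isLipschitzKernel_massKernel R).tendstoUniformlyOn_setIntegral
      measurable_massWeight hN (isCompact_strip R).isBounded

lemma integral_particleKernel (hN : Integrable (fun z => (particleWeight z : ℝ)) N) :
    IsBranchingDrift fun x => (0, ∫ z, particleKernel z x ∂N) := by
  have hfin : ∀ k : ℕ, IsFiniteMeasure (N.restrict {z | 1 / ((k : ℝ) + 1) ≤ particleWeight z}) :=
    fun k => ⟨by simpa using hN.measure_ge_lt_top Nat.one_div_pos_of_nat⟩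
  exact .of_tendsto_particleKernel
    (fun R => (isLipschitzKernel_particleKernel R).exists_lipschitzOnWith_integral hN)
    fun R => (isLipschitzKernel_particleKernel R).tendstoUniformlyOn_setIntegral
      measurable_particleWeight hN (isCompact_strip R).isBounded

end IsBranchingDrift

end ElementaryDrifts

lemma IsBranchingDrift.continuousOn {G : ℝ × ℝ → ℝ × ℝ} (hG : IsBranchingDrift G) :
    ContinuousOn G halfStrip := by
  intro x hx
  obtain ⟨K, hK⟩ := hG.exists_lipschitzOnWith (x.1.toNNReal + 1)
  have hxK : x.1 < ((x.1.toNNReal + 1 : ℝ≥0) : ℝ) := by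
    simpa using (Real.le_coe_toNNReal x.1).trans_lt (lt_add_one _)
  refine (hK.continuousOn x ⟨⟨hx.1, hxK.le⟩, hx.2⟩).mono_of_mem_nhdsWithin ?_
  filter_upwards [self_mem_nhdsWithin,
    mem_nhdsWithin_of_mem_nhds (continuous_fst.continuousAt.eventually_lt_const hxK)] with y hy hyK
  exact ⟨⟨hy.1, hyK.le⟩, hy.2⟩

section StateSpace

variable {z : ℝ × ℝ}

/-- The identification of `Mset` with `ℝ≥0 × ℕ`; points outside `Mset` get a junk value. -/
def toState (z : ℝ × ℝ) : ℝ≥0 × ℕ := (z.1.toNNReal, ⌊z.2⌋₊)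

lemma measurable_toState : Measurable toState := by
  unfold toState
  fun_prop

lemma coe_toState_fst (hz : z ∈ Mset) : ((toState z).1 : ℝ) = z.1 := Real.coe_toNNReal _ hz.1

lemma coe_toState_snd (hz : z ∈ Mset) : ((toState z).2 : ℝ) = z.2 := by
  obtain ⟨-, n, hn⟩ := hz
  simp [toState, hn]

lemma nonneg_of_mem_Mset (hz : z ∈ Mset) : 0 ≤ z := by
  obtain ⟨hz₁, n, hn⟩ := hz
  exact ⟨hz₁, hn ▸ n.cast_nonneg⟩

lemma add_mem_Mset (hz : z ∈ Mm1set) : z + (0, 1) ∈ Mset := by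
  obtain ⟨hz₁, n, hn, hz₂⟩ := hz
  obtain ⟨m, hm⟩ := Int.eq_ofNat_of_zero_le (by omega : 0 ≤ n + 1)
  exact ⟨by simpa using hz₁, m, by simpa [hz₂] using (by exact_mod_cast hm : (n : ℝ) + 1 = m)⟩

lemma jumpKernel_toState (hz : z ∈ Mset) (l : ℝ × ℝ) :
    jumpKernel (toState z) (l.1, Real.exp (-l.2)) = Real.exp (-(z.1 * l.1 + z.2 * l.2)) := by
  rw [jumpKernel, ← Real.exp_nat_mul, ← Real.exp_add, coe_toState_fst hz, coe_toState_snd hz]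
  ring_nf

lemma massKernel_toState (hz : z ∈ Mset) (l : ℝ × ℝ) :
    massKernel (toState z) (l.1, Real.exp (-l.2)) =
      Real.exp (-(l.1 * z.1 + l.2 * z.2)) - 1 + l.1 * z.1 := by
  rw [massKernel, jumpKernel_toState hz, coe_toState_fst hz]
  ring_nf

lemma particleKernel_toState (hz : z ∈ Mm1set) (l : ℝ × ℝ) :
    particleKernel (toState (z + (0, 1))) (l.1, Real.exp (-l.2)) =
      -(Real.exp (-l.2) * (1 - Real.exp (-(l.1 * z.1 + l.2 * z.2)))) := by
  rw [particleKernel, jumpKernel_toState (add_mem_Mset hz), mul_sub, neg_sub, mul_one,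
    ← Real.exp_add]
  simp only [Prod.fst_add, Prod.snd_add, add_zero]
  ring_nf

end StateSpace

namespace BranchingMechanism

variable (B : BranchingMechanism)

/-- The jump measure `n₁`, carried over to `ℝ≥0 × ℕ`. -/
def massJumps : Measure (ℝ≥0 × ℕ) := B.n1.map toState

/-- The law `n₂` of the jumps of a particle, in terms of the number of offspring. -/
def particleJumps : Measure (ℝ≥0 × ℕ) := B.n2.map fun z => toState (z + (0, 1))

lemma ae_n1_mem_Mset : ∀ᵐ z ∂B.n1, z ∈ Mset := B.n1_supp

lemma ae_n2_mem_Mm1set : ∀ᵐ z ∂B.n2, z ∈ Mm1set := B.n2_supp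

lemma measurable_toState_add : Measurable fun z : ℝ × ℝ => toState (z + (0, 1)) :=
  measurable_toState.comp (measurable_id.add_const _)

lemma integrable_n1_weight : Integrable (fun z => min z.1 (z.1 ^ 2) + z.2) B.n1 := by
  refine (lintegral_ofReal_ne_top_iff_integrable (by fun_prop) ?_).1 B.n1_moment
  filter_upwards [B.ae_n1_mem_Mset] with z hz
  exact add_nonneg (le_min hz.1 (sq_nonneg _)) (nonneg_of_mem_Mset hz).2

lemma integrable_n2_weight : Integrable (fun z => z.1 + |z.2|) B.n2 := by
  refine (lintegral_ofReal_ne_top_iff_integrable (by fun_prop) ?_).1 B.n2_moment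
  filter_upwards [B.ae_n2_mem_Mm1set] with z hz
  exact add_nonneg hz.1 (abs_nonneg _)

lemma integrable_massWeight : Integrable (fun z => (massWeight z : ℝ)) B.massJumps := by
  refine (integrable_map_measure measurable_massWeight.coe_nnreal_real.aestronglyMeasurable
    measurable_toState.aemeasurable).2 (B.integrable_n1_weight.congr ?_)
  filter_upwards [B.ae_n1_mem_Mset] with z hz
  simp [massWeight, coe_toState_fst hz, coe_toState_snd hz]

lemma integrable_particleWeight : Integrable (fun z => (particleWeight z : ℝ)) B.particleJumps := by
  refine (integrable_map_measure measurable_particleWeight.coe_nnreal_real.aestronglyMeasurable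
    measurable_toState_add.aemeasurable).2 (B.integrable_n2_weight.congr ?_)
  filter_upwards [B.ae_n2_mem_Mm1set] with z hz
  simp [particleWeight, coe_toState_fst (add_mem_Mset hz), coe_toState_snd (add_mem_Mset hz)]

lemma integrable_n1_snd : Integrable (fun z => z.2) B.n1 := by
  refine B.integrable_n1_weight.mono' (by fun_prop) ?_
  filter_upwards [B.ae_n1_mem_Mset] with z hz
  rw [Real.norm_of_nonneg (nonneg_of_mem_Mset hz).2]
  exact le_add_of_nonneg_left (le_min hz.1 (sq_nonneg _))

lemma integrable_n2_fst : Integrable (fun z => z.1) B.n2 := by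
  refine B.integrable_n2_weight.mono' (by fun_prop) ?_
  filter_upwards [B.ae_n2_mem_Mm1set] with z hz
  rw [Real.norm_of_nonneg hz.1]
  exact le_add_of_nonneg_right (abs_nonneg _)

lemma integrable_n2_snd : Integrable (fun z => z.2) B.n2 := by
  refine B.integrable_n2_weight.mono' (by fun_prop) ?_
  filter_upwards [B.ae_n2_mem_Mm1set] with z hz
  exact le_add_of_nonneg_left hz.1

/-- The vector field driving `(V₁, e^{-V₂})`. -/
def drift : ℝ × ℝ → ℝ × ℝ :=
  (fun x => (-(B.a11 * x.1), 0)) + (fun x => (-(B.alpha * x.1 ^ 2), 0)) +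
    (fun x => (-∫ z, massKernel z x ∂B.massJumps, 0)) +
    (fun x => (0, -(B.a21 * x.1 * x.2))) + (fun x => (0, ∫ z, particleKernel z x ∂B.particleJumps))

lemma isBranchingDrift_drift : IsBranchingDrift B.drift :=
  ((((IsBranchingDrift.linear B.a11).add (.quadratic ⟨B.alpha, B.alpha_nonneg⟩)).add
    (.neg_integral_massKernel B.integrable_massWeight)).add
    (.neg_mul ⟨B.a21, B.a21_nonneg⟩)).add (.integral_particleKernel B.integrable_particleWeight)

lemma integral_massKernel (l : ℝ × ℝ) :
    ∫ z, massKernel z (l.1, Real.exp (-l.2)) ∂B.massJumps =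
      ∫ z, (Real.exp (-(l.1 * z.1 + l.2 * z.2)) - 1 + l.1 * z.1) ∂B.n1 := by
  rw [massJumps, integral_map measurable_toState.aemeasurable
    (measurable_massKernel _).aestronglyMeasurable]
  exact integral_congr_ae (B.ae_n1_mem_Mset.mono fun z hz => massKernel_toState hz l)

lemma integral_particleKernel (l : ℝ × ℝ) :
    ∫ z, particleKernel z (l.1, Real.exp (-l.2)) ∂B.particleJumps =
      -(Real.exp (-l.2) * ∫ z, (1 - Real.exp (-(l.1 * z.1 + l.2 * z.2))) ∂B.n2) := by
  rw [particleJumps, integral_map measurable_toState_add.aemeasurable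
    (measurable_particleKernel _).aestronglyMeasurable, ← integral_const_mul, ← integral_neg]
  exact integral_congr_ae (B.ae_n2_mem_Mm1set.mono fun z hz => particleKernel_toState hz l)

lemma drift_apply (l : ℝ × ℝ) :
    B.drift (l.1, Real.exp (-l.2)) = (mPhi1 B l, -(Real.exp (-l.2) * mPhi2 B l)) := by
  simp only [drift, Pi.add_apply, Prod.mk_add_mk, B.integral_massKernel, B.integral_particleKernel,
    mPhi1, mPhi2]
  ring_nf

variable {B} {l : ℝ × ℝ}

lemma mk_exp_neg_mem_halfStrip (hl : 0 ≤ l) : (l.1, Real.exp (-l.2)) ∈ halfStrip :=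
  ⟨hl.1, (Real.exp_pos _).le, Real.exp_le_one_iff.2 (neg_nonpos.2 hl.2)⟩

lemma integrable_mPhi1 (hl : 0 ≤ l) :
    Integrable (fun z => Real.exp (-(l.1 * z.1 + l.2 * z.2)) - 1 + l.1 * z.1) B.n1 := by
  obtain ⟨hl₁, hl₂⟩ := mk_exp_neg_mem_halfStrip hl
  refine (((isLipschitzKernel_massKernel ⟨l.1, hl.1⟩).integrable B.integrable_massWeight
    ⟨⟨hl₁, le_rfl⟩, hl₂⟩).comp_measurable measurable_toState).congr ?_
  exact B.ae_n1_mem_Mset.mono fun z hz => massKernel_toState hz l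

lemma integrable_mPhi2 (hl : 0 ≤ l) :
    Integrable (fun z => 1 - Real.exp (-(l.1 * z.1 + l.2 * z.2))) B.n2 := by
  obtain ⟨hl₁, hl₂⟩ := mk_exp_neg_mem_halfStrip hl
  refine ((((isLipschitzKernel_particleKernel ⟨l.1, hl.1⟩).integrable B.integrable_particleWeight
    ⟨⟨hl₁, le_rfl⟩, hl₂⟩).comp_measurable measurable_toState_add).const_mul
    (-Real.exp l.2)).congr ?_
  filter_upwards [B.ae_n2_mem_Mm1set] with z hz
  rw [Function.comp_apply, particleKernel_toState hz, neg_mul_neg, ← mul_assoc, ← Real.exp_add,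
    add_neg_cancel, Real.exp_zero, one_mul]

lemma mPhi1_le (hl : 0 ≤ l) : mPhi1 B l ≤ H11 B * l.1 + H12 B * l.2 := by
  have hjump : -∫ z, (Real.exp (-(l.1 * z.1 + l.2 * z.2)) - 1 + l.1 * z.1) ∂B.n1 ≤
      H12 B * l.2 := by
    rw [H12, ← integral_neg, ← integral_mul_const]
    refine integral_mono (integrable_mPhi1 hl).neg (B.integrable_n1_snd.mul_const _) fun z => ?_
    linarith [Real.add_one_le_exp (-(l.1 * z.1 + l.2 * z.2))]
  rw [mPhi1, H11]
  linarith [mul_nonneg B.alpha_nonneg (sq_nonneg l.1)]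

lemma mPhi2_le (hl : 0 ≤ l) : mPhi2 B l ≤ H21 B * l.1 + H22 B * l.2 := by
  have hjump : ∫ z, (1 - Real.exp (-(l.1 * z.1 + l.2 * z.2))) ∂B.n2 ≤
      (∫ z, z.1 ∂B.n2) * l.1 + H22 B * l.2 := by
    have h₁ := B.integrable_n2_fst.mul_const l.1
    have h₂ := B.integrable_n2_snd.mul_const l.2
    rw [H22, ← integral_mul_const, ← integral_mul_const, ← integral_add h₁ h₂]
    refine integral_mono (integrable_mPhi2 hl) (h₁.add h₂) fun z => ?_
    change _ ≤ z.1 * l.1 + z.2 * l.2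
    linarith [Real.add_one_le_exp (-(l.1 * z.1 + l.2 * z.2))]
  rw [mPhi2, H21]
  linarith

lemma continuousOn_drift_exp :
    ContinuousOn (fun l : ℝ × ℝ => B.drift (l.1, Real.exp (-l.2))) (Ici 0) :=
  B.isBranchingDrift_drift.continuousOn.comp (by fun_prop) fun _ hl => mk_exp_neg_mem_halfStrip hl

lemma continuousOn_mPhi1 : ContinuousOn (mPhi1 B) (Ici 0) :=
  (continuousOn_drift_exp (B := B)).fst.congr fun l _ => by simp only [drift_apply]

lemma continuousOn_mPhi2 : ContinuousOn (mPhi2 B) (Ici 0) := by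
  have hexp : ContinuousOn (fun l : ℝ × ℝ => -Real.exp l.2) (Ici 0) := by fun_prop
  refine (hexp.mul (continuousOn_drift_exp (B := B)).snd).congr fun l _ => ?_
  simp only [Pi.mul_apply, drift_apply, neg_mul_neg, ← mul_assoc, ← Real.exp_add, add_neg_cancel,
    Real.exp_zero, one_mul]

lemma H12_nonneg : 0 ≤ H12 B :=
  integral_nonneg_of_ae (B.ae_n1_mem_Mset.mono fun _ hz => (nonneg_of_mem_Mset hz).2)

lemma H21_nonneg : 0 ≤ H21 B :=
  add_nonneg B.a21_nonneg (integral_nonneg_of_ae (B.ae_n2_mem_Mm1set.mono fun _ hz => hz.1))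

end BranchingMechanism

section Cumulant

lemma hasDerivWithinAt_Ici_of_eq_integral {p f : ℝ → ℝ} {c : ℝ} (hp : ContinuousOn p (Ici 0))
    (hf : ∀ t, 0 ≤ t → f t = c + ∫ s in (0 : ℝ)..t, p s) {t : ℝ} (ht : 0 ≤ t) :
    HasDerivWithinAt f (p t) (Ici t) t := by
  have hint : IntervalIntegrable p volume 0 t :=
    (hp.mono (by simpa [uIcc_of_le ht] using Icc_subset_Ici_self)).intervalIntegrable
  have hpt : ContinuousOn p (Ioi t) := hp.mono fun s hs => ht.trans (le_of_lt hs)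
  exact ((intervalIntegral.integral_hasDerivWithinAt_right hint
    (hpt.stronglyMeasurableAtFilter_nhdsWithin measurableSet_Ioi t)
    ((hp t ht).mono fun s hs => ht.trans (le_of_lt hs))).const_add c).congr
    (fun s hs => hf s (ht.trans hs)) (hf t ht)

namespace SolvesCumulant

variable {B : BranchingMechanism} {l : ℝ × ℝ} {V : ℝ → ℝ × ℝ}

lemma mapsTo (hV : SolvesCumulant B l V) : MapsTo V (Ici 0) (Ici 0) := fun t ht => hV.2.1 t ht

lemma apply_zero (hV : SolvesCumulant B l V) : V 0 = l := by
  obtain ⟨-, -, hint⟩ := hV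
  simpa [Prod.ext_iff] using hint 0 le_rfl

lemma hasDerivWithinAt_fst (hV : SolvesCumulant B l V) {t : ℝ} (ht : 0 ≤ t) :
    HasDerivWithinAt (fun s => (V s).1) (mPhi1 B (V t)) (Ici t) t :=
  hasDerivWithinAt_Ici_of_eq_integral (BranchingMechanism.continuousOn_mPhi1.comp hV.1 hV.mapsTo)
    (fun s hs => (hV.2.2 s hs).1) ht

lemma hasDerivWithinAt_snd (hV : SolvesCumulant B l V) {t : ℝ} (ht : 0 ≤ t) :
    HasDerivWithinAt (fun s => (V s).2) (mPhi2 B (V t)) (Ici t) t :=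
  hasDerivWithinAt_Ici_of_eq_integral (BranchingMechanism.continuousOn_mPhi2.comp hV.1 hV.mapsTo)
    (fun s hs => (hV.2.2 s hs).2) ht

lemma hasDerivWithinAt_drift (hV : SolvesCumulant B l V) {t : ℝ} (ht : 0 ≤ t) :
    HasDerivWithinAt (fun s => ((V s).1, Real.exp (-(V s).2)))
      (B.drift ((V t).1, Real.exp (-(V t).2))) (Ici t) t := by
  rw [B.drift_apply, ← mul_neg]
  exact (hV.hasDerivWithinAt_fst ht).prodMk (hV.hasDerivWithinAt_snd ht).neg.exp

lemma isBranchingPair {V : ℝ → ℝ × ℝ → ℝ × ℝ}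
    (hV : ∀ l : ℝ × ℝ, 0 ≤ l.1 → 0 ≤ l.2 → SolvesCumulant B l (fun t => V t l)) {T : ℝ}
    (hT : 0 ≤ T) :
    IsBranchingPair fun l => ((V T (l.1, l.2)).1, Real.exp (-(V T (l.1, l.2)).2)) := by
  have hVl (l : ℝ≥0 × ℝ≥0) : SolvesCumulant B (l.1, l.2) (fun t => V t (l.1, l.2)) :=
    hV _ l.1.coe_nonneg l.2.coe_nonneg
  refine B.isBranchingDrift_drift.isBranchingPair_flow
    (U := fun l t => ((V t (l.1, l.2)).1, Real.exp (-(V t (l.1, l.2)).2))) ?_ hT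
    (fun l t ht => BranchingMechanism.mk_exp_neg_mem_halfStrip ((hVl l).mapsTo ht.1)) (fun l => ?_)
    fun l t ht => (hVl l).hasDerivWithinAt_drift ht.1
  · simpa only [(hVl _).apply_zero] using IsBranchingPair.initial
  · have hc := (hVl l).1.mono (Icc_subset_Ici_self : Icc 0 T ⊆ Ici 0)
    exact hc.fst.prodMk hc.snd.neg.rexp

end SolvesCumulant

end Cumulant

section Decay

-- `(p, q) = (1, 1) adj(-H)` is mapped by `H` to `-det H (1, 1)`.
lemma exists_pos_vecMul_le_neg_mul {h₁₁ h₁₂ h₂₁ h₂₂ : ℝ} (h12 : 0 ≤ h₁₂) (h21 : 0 ≤ h₂₁)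
    (hdet : 0 < h₁₁ * h₂₂ - h₁₂ * h₂₁) (htr : h₁₁ + h₂₂ < 0) :
    ∃ κ p q : ℝ, 0 < κ ∧ 0 < p ∧ 0 < q ∧
      p * h₁₁ + q * h₂₁ ≤ -κ * p ∧ p * h₁₂ + q * h₂₂ ≤ -κ * q := by
  have hdiag : 0 < h₁₁ * h₂₂ := by linarith [mul_nonneg h12 h21]
  obtain ⟨h11, h22⟩ : h₁₁ < 0 ∧ h₂₂ < 0 :=
    (pos_and_pos_or_neg_and_neg_of_mul_pos hdiag).resolve_left fun h => by linarith
  have hp : 0 < h₂₁ - h₂₂ := by linarith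
  have hq : 0 < h₁₂ - h₁₁ := by linarith
  set M := max (h₂₁ - h₂₂) (h₁₂ - h₁₁)
  have hM : 0 < M := lt_max_of_lt_left hp
  have hκ : 0 < (h₁₁ * h₂₂ - h₁₂ * h₂₁) / M := div_pos hdet hM
  refine ⟨(h₁₁ * h₂₂ - h₁₂ * h₂₁) / M, _, _, hκ, hp, hq, ?_, ?_⟩
  · have := mul_le_mul_of_nonneg_left (le_max_left (h₂₁ - h₂₂) (h₁₂ - h₁₁)) hκ.le
    rw [div_mul_cancel₀ _ hM.ne'] at this
    linarith
  · have := mul_le_mul_of_nonneg_left (le_max_right (h₂₁ - h₂₂) (h₁₂ - h₁₁)) hκ.le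
    rw [div_mul_cancel₀ _ hM.ne'] at this
    linarith

lemma le_mul_exp_of_deriv_right_le {f f' : ℝ → ℝ} {K T : ℝ} (hT : 0 ≤ T)
    (hf : ContinuousOn f (Icc 0 T)) (hf' : ∀ t ∈ Ico 0 T, HasDerivWithinAt f (f' t) (Ici t) t)
    (hle : ∀ t ∈ Ico 0 T, f' t ≤ K * f t) : f T ≤ f 0 * Real.exp (K * T) := by
  simpa [gronwallBound_ε0] using le_gronwallBound_of_liminf_deriv_right_le hf
    (fun t ht _ hr => (hf' t ht).liminf_right_slope_le hr) le_rfl (ε := 0) (by simpa using hle) T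
    ⟨hT, le_rfl⟩

lemma SolvesCumulant.weighted_le {B : BranchingMechanism} {κ p q : ℝ} (hp : 0 ≤ p) (hq : 0 ≤ q)
    (h₁ : p * H11 B + q * H21 B ≤ -κ * p) (h₂ : p * H12 B + q * H22 B ≤ -κ * q) {l : ℝ × ℝ}
    {V : ℝ → ℝ × ℝ} (hV : SolvesCumulant B l V) {t : ℝ} (ht : 0 ≤ t) :
    p * (V t).1 + q * (V t).2 ≤ (p * l.1 + q * l.2) * Real.exp (-κ * t) := by
  have hc := hV.1.mono (Icc_subset_Ici_self : Icc 0 t ⊆ Ici 0)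
  have hdecay := le_mul_exp_of_deriv_right_le (f := fun s => p * (V s).1 + q * (V s).2) (K := -κ)
    ht (by fun_prop) (fun s hs => ((hV.hasDerivWithinAt_fst hs.1).const_mul p).add
      ((hV.hasDerivWithinAt_snd hs.1).const_mul q)) fun s hs => ?_
  · simpa only [hV.apply_zero] using hdecay
  obtain ⟨hV₁, hV₂⟩ : 0 ≤ (V s).1 ∧ 0 ≤ (V s).2 := hV.mapsTo hs.1
  calc p * mPhi1 B (V s) + q * mPhi2 B (V s)
      ≤ p * (H11 B * (V s).1 + H12 B * (V s).2) + q * (H21 B * (V s).1 + H22 B * (V s).2) := by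
        gcongr
        exacts [BranchingMechanism.mPhi1_le ⟨hV₁, hV₂⟩, BranchingMechanism.mPhi2_le ⟨hV₁, hV₂⟩]
    _ = (p * H11 B + q * H21 B) * (V s).1 + (p * H12 B + q * H22 B) * (V s).2 := by ring
    _ ≤ -κ * p * (V s).1 + -κ * q * (V s).2 := by gcongr
    _ = -κ * (p * (V s).1 + q * (V s).2) := by ring

lemma exists_cumulant_add_le_mul_exp {B : BranchingMechanism}
    (hdet : 0 < H11 B * H22 B - H12 B * H21 B) (htr : H11 B + H22 B < 0) :
    ∃ κ C : ℝ, 0 < κ ∧ 0 < C ∧ ∀ (l : ℝ × ℝ) (V : ℝ → ℝ × ℝ), 0 ≤ l → SolvesCumulant B l V →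
      ∀ t, 0 ≤ t → (V t).1 + (V t).2 ≤ C * Real.exp (-κ * t) * (l.1 + l.2) := by
  obtain ⟨κ, p, q, hκ, hp, hq, h₁, h₂⟩ := exists_pos_vecMul_le_neg_mul
    BranchingMechanism.H12_nonneg BranchingMechanism.H21_nonneg hdet htr
  have hmin : 0 < min p q := lt_min hp hq
  refine ⟨κ, max p q / min p q, hκ, div_pos (lt_max_of_lt_left hp) hmin, fun l V hl hV t ht => ?_⟩
  obtain ⟨hl₁, hl₂⟩ : 0 ≤ l.1 ∧ 0 ≤ l.2 := hl
  obtain ⟨hV₁, hV₂⟩ : 0 ≤ (V t).1 ∧ 0 ≤ (V t).2 := hV.mapsTo ht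
  rw [mul_assoc, div_mul_eq_mul_div, le_div_iff₀ hmin]
  calc ((V t).1 + (V t).2) * min p q = min p q * (V t).1 + min p q * (V t).2 := by ring
    _ ≤ p * (V t).1 + q * (V t).2 := by gcongr <;> simp
    _ ≤ (p * l.1 + q * l.2) * Real.exp (-κ * t) := hV.weighted_le hp.le hq.le h₁ h₂ ht
    _ ≤ (max p q * l.1 + max p q * l.2) * Real.exp (-κ * t) := by gcongr <;> simp
    _ = max p q * (Real.exp (-κ * t) * (l.1 + l.2)) := by ring

end Decay

section Increment

lemma integrable_exp_neg {μ : Measure (ℝ × ℝ)} [IsFiniteMeasure μ] (hμ : ∀ᵐ z ∂μ, 0 ≤ z)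
    {l : ℝ × ℝ} (hl : 0 ≤ l) :
    Integrable (fun z => Real.exp (-(l.1 * z.1 + l.2 * z.2))) μ := by
  refine .of_bound (by fun_prop) 1 ?_
  filter_upwards [hμ] with z hz
  obtain ⟨hz₁, hz₂⟩ : 0 ≤ z.1 ∧ 0 ≤ z.2 := hz
  rw [Real.norm_of_nonneg (Real.exp_nonneg _), Real.exp_le_one_iff]
  exact neg_nonpos.2 (add_nonneg (mul_nonneg hl.1 hz₁) (mul_nonneg hl.2 hz₂))

lemma tendsto_inv_mul_one_sub_exp_neg_mul (x : ℝ) :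
    Tendsto (fun s => s⁻¹ * (1 - Real.exp (-(s * x)))) (𝓝[>] 0) (𝓝 x) := by
  have hderiv : HasDerivAt (fun s => -Real.exp (-(s * x))) x 0 := by
    convert! (hasDerivAt_mul_const x).neg.exp.neg using 1
    simp
  simpa [neg_add_eq_sub] using hderiv.tendsto_slope_zero_right

-- Fatou's lemma for `s⁻¹ (1 - e^{-s (z₁ + z₂)}) → z₁ + z₂` as `s → 0`.
lemma lintegral_add_le_of_exp_neg_le_laplaceTransform {μ : Measure (ℝ × ℝ)}
    [IsProbabilityMeasure μ] (hμ : ∀ᵐ z ∂μ, 0 ≤ z) {M : ℝ}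
    (hM : ∀ s > 0, Real.exp (-(M * s)) ≤ laplaceTransform μ (s, s)) :
    ∫⁻ z, ENNReal.ofReal (z.1 + z.2) ∂μ ≤ ENNReal.ofReal M := by
  let f (s : ℝ) (z : ℝ × ℝ) : ℝ := s⁻¹ * (1 - Real.exp (-(s * z.1 + s * z.2)))
  have hlim (z : ℝ × ℝ) : Tendsto (fun s => ENNReal.ofReal (f s z)) (𝓝[>] 0)
      (𝓝 (ENNReal.ofReal (z.1 + z.2))) := by
    simpa only [f, mul_add] using
      ENNReal.tendsto_ofReal (tendsto_inv_mul_one_sub_exp_neg_mul (z.1 + z.2))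
  have hle (s : ℝ) (hs : 0 < s) : ∫⁻ z, ENNReal.ofReal (f s z) ∂μ ≤ ENNReal.ofReal M := by
    have hexp := integrable_exp_neg hμ (l := (s, s)) ⟨hs.le, hs.le⟩
    have hf_nonneg : 0 ≤ᵐ[μ] f s := by
      filter_upwards [hμ] with z hz
      obtain ⟨hz₁, hz₂⟩ : 0 ≤ z.1 ∧ 0 ≤ z.2 := hz
      exact mul_nonneg (inv_nonneg.2 hs.le) (sub_nonneg.2 (Real.exp_le_one_iff.2 (by
        have := add_nonneg (mul_nonneg hs.le hz₁) (mul_nonneg hs.le hz₂)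
        linarith)))
    have hf_int : Integrable (f s) μ := ((integrable_const 1).sub hexp).const_mul s⁻¹
    rw [← ofReal_integral_eq_lintegral_ofReal hf_int hf_nonneg]
    refine ENNReal.ofReal_le_ofReal ?_
    rw [integral_const_mul, integral_sub (integrable_const 1) hexp, integral_const, probReal_univ,
      one_smul, inv_mul_le_iff₀ hs]
    have hMs : Real.exp (-(M * s)) ≤ ∫ z, Real.exp (-(s * z.1 + s * z.2)) ∂μ := hM s hs
    linarith [Real.add_one_le_exp (-(M * s))]
  calc ∫⁻ z, ENNReal.ofReal (z.1 + z.2) ∂μ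
      = ∫⁻ z, liminf (fun s => ENNReal.ofReal (f s z)) (𝓝[>] 0) ∂μ := by
        simp only [(hlim _).liminf_eq]
    _ ≤ liminf (fun s => ∫⁻ z, ENNReal.ofReal (f s z) ∂μ) (𝓝[>] 0) :=
        lintegral_liminf_le fun s => by fun_prop
    _ ≤ ENNReal.ofReal M :=
        liminf_le_of_le (by isBoundedDefault) fun b hb =>
          let ⟨s, hsb, hs⟩ := (hb.and self_mem_nhdsWithin).exists
          hsb.trans (hle s hs)

lemma IsLaplaceTransform.exists_measure_of_exp_neg_le {f : ℝ≥0 × ℝ≥0 → ℝ}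
    (hf : IsLaplaceTransform f) {M : ℝ} (hM : ∀ l, Real.exp (-(M * (l.1 + l.2))) ≤ f l) :
    ∃ Q : Measure (ℝ × ℝ), IsProbabilityMeasure Q ∧ (∀ᵐ z ∂Q, 0 ≤ z) ∧
      (∀ l : ℝ≥0 × ℝ≥0, laplaceTransform Q (l.1, l.2) = f l) ∧
      ∫⁻ z, ENNReal.ofReal (z.1 + z.2) ∂Q ≤ ENNReal.ofReal (2 * M) := by
  have hf0 : f 0 = 1 := (hf.le_one 0).antisymm (by simpa using hM 0)
  have hcont : ContinuousAt f 0 := by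
    have hexp : Continuous fun l : ℝ≥0 × ℝ≥0 => Real.exp (-(M * (l.1 + l.2))) := by fun_prop
    refine tendsto_of_tendsto_of_tendsto_of_le_of_le (by simpa [hf0] using hexp.tendsto 0)
      (hf0 ▸ tendsto_const_nhds) hM hf.le_one
  obtain ⟨Q, hQ, hQ0, hQf⟩ := hf.exists_measure hcont
  refine ⟨Q, hQ, hQ0, hQf, lintegral_add_le_of_exp_neg_le_laplaceTransform hQ0 fun s hs => ?_⟩
  lift s to ℝ≥0 using hs.le
  rw [hQf (s, s)]
  convert hM (s, s) using 2
  ring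

lemma SolvesCumulant.exists_increment_law {B : BranchingMechanism} {V : ℝ → ℝ × ℝ → ℝ × ℝ}
    (hV : ∀ l : ℝ × ℝ, 0 ≤ l.1 → 0 ≤ l.2 → SolvesCumulant B l (fun t => V t l)) {t K : ℝ}
    (ht : 0 ≤ t) (hK : ∀ l : ℝ × ℝ, 0 ≤ l → (V t l).1 + (V t l).2 ≤ K * (l.1 + l.2)) {u : ℝ × ℝ}
    (hu : u ∈ Mset) :
    ∃ Q : Measure (ℝ × ℝ), IsProbabilityMeasure Q ∧ (∀ᵐ z ∂Q, 0 ≤ z) ∧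
      (∀ l, 0 ≤ l → laplaceTransform Q l = Real.exp (-(u.1 * (V t l).1 + u.2 * (V t l).2))) ∧
      ∫⁻ z, ENNReal.ofReal (z.1 + z.2) ∂Q ≤ ENNReal.ofReal (2 * (K * (u.1 + u.2))) := by
  have hf := (SolvesCumulant.isBranchingPair hV ht).isLaplaceTransform_jumpKernel (toState u)
  simp only [jumpKernel_toState hu] at hf
  obtain ⟨hu₁, hu₂⟩ : 0 ≤ u.1 ∧ 0 ≤ u.2 := nonneg_of_mem_Mset hu
  have hbound (l : ℝ≥0 × ℝ≥0) : Real.exp (-(K * (u.1 + u.2) * (l.1 + l.2))) ≤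
      Real.exp (-(u.1 * (V t (l.1, l.2)).1 + u.2 * (V t (l.1, l.2)).2)) := by
    have hl : (0 : ℝ × ℝ) ≤ (↑l.1, ↑l.2) := ⟨l.1.coe_nonneg, l.2.coe_nonneg⟩
    obtain ⟨hV₁, hV₂⟩ : 0 ≤ (V t (l.1, l.2)).1 ∧ 0 ≤ (V t (l.1, l.2)).2 :=
      (hV _ hl.1 hl.2).mapsTo ht
    refine Real.exp_le_exp.2 (neg_le_neg ?_)
    calc u.1 * (V t (l.1, l.2)).1 + u.2 * (V t (l.1, l.2)).2
        ≤ (u.1 + u.2) * ((V t (l.1, l.2)).1 + (V t (l.1, l.2)).2) := by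
          linarith [mul_nonneg hu₁ hV₂, mul_nonneg hu₂ hV₁]
      _ ≤ (u.1 + u.2) * (K * (l.1 + l.2)) := by gcongr; exact hK _ hl
      _ = K * (u.1 + u.2) * (l.1 + l.2) := by ring
  obtain ⟨Q, hQ, hQ0, hQf, hQm⟩ := hf.exists_measure_of_exp_neg_le hbound
  exact ⟨Q, hQ, hQ0, fun l hl => hQf (⟨l.1, hl.1⟩, ⟨l.2, hl.2⟩), hQm⟩

end Increment

section Coupling

lemma eq_conv_of_laplaceTransform_eq_mul {μ ν ρ : Measure (ℝ × ℝ)} [IsProbabilityMeasure μ]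
    [IsProbabilityMeasure ν] [IsProbabilityMeasure ρ] (hμ : ∀ᵐ z ∂μ, 0 ≤ z)
    (hν : ∀ᵐ z ∂ν, 0 ≤ z) (hρ : ∀ᵐ z ∂ρ, 0 ≤ z)
    (h : ∀ l, 0 ≤ l → laplaceTransform ρ l = laplaceTransform μ l * laplaceTransform ν l) :
    μ ∗ ν = ρ := by
  refine ext_of_laplaceTransform ?_ hρ fun l hl => by rw [laplaceTransform_conv, h l hl]
  refine (ae_map_iff (by fun_prop) measurableSet_Ici).2 ?_
  filter_upwards [Measure.quasiMeasurePreserving_fst.ae hμ,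
    Measure.quasiMeasurePreserving_snd.ae hν] with z hz₁ hz₂
  exact add_nonneg hz₁ hz₂

-- `(a + x, a + y)` with `a`, `x`, `y` independent.
lemma exists_coupling_conv (μ ν ρ : Measure (ℝ × ℝ)) [IsProbabilityMeasure μ]
    [IsProbabilityMeasure ν] [IsProbabilityMeasure ρ] (hν : ∀ᵐ z ∂ν, 0 ≤ z)
    (hρ : ∀ᵐ z ∂ρ, 0 ≤ z) :
    ∃ Pc, IsCoupling Pc (μ ∗ ν) (μ ∗ ρ) ∧
      ∫⁻ w, ENNReal.ofReal (|w.1.1 - w.2.1| + |w.1.2 - w.2.2|) ∂Pc ≤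
        ∫⁻ z, ENNReal.ofReal (z.1 + z.2) ∂ν + ∫⁻ z, ENNReal.ofReal (z.1 + z.2) ∂ρ := by
  let F (w : (ℝ × ℝ) × ((ℝ × ℝ) × (ℝ × ℝ))) : (ℝ × ℝ) × (ℝ × ℝ) := (w.1 + w.2.1, w.1 + w.2.2)
  have hF : Measurable F := by fun_prop
  have hν' := (measurePreserving_fst (μ := ν) (ν := ρ)).comp
    (measurePreserving_snd (μ := μ) (ν := ν.prod ρ))
  have hρ' := (measurePreserving_snd (μ := ν) (ν := ρ)).comp
    (measurePreserving_snd (μ := μ) (ν := ν.prod ρ))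
  have hfst := (MeasurePreserving.id μ).prod (measurePreserving_fst (μ := ν) (ν := ρ))
  have hsnd := (MeasurePreserving.id μ).prod (measurePreserving_snd (μ := ν) (ν := ρ))
  refine ⟨(μ.prod (ν.prod ρ)).map F, ⟨Measure.isProbabilityMeasure_map hF.aemeasurable, ?_, ?_⟩, ?_⟩
  · rw [Measure.conv, ← hfst.map_eq, Measure.map_map measurable_fst hF,
      Measure.map_map (by fun_prop) hfst.measurable]
    rfl
  · rw [Measure.conv, ← hsnd.map_eq, Measure.map_map measurable_snd hF,
      Measure.map_map (by fun_prop) hsnd.measurable]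
    rfl
  · rw [lintegral_map (by fun_prop) hF, ← hν'.lintegral_comp (by fun_prop),
      ← hρ'.lintegral_comp (by fun_prop), ← lintegral_add_left (by fun_prop)]
    refine lintegral_mono_ae ?_
    filter_upwards [hν'.quasiMeasurePreserving.ae hν, hρ'.quasiMeasurePreserving.ae hρ]
      with w hx hy
    obtain ⟨hx₁, hx₂⟩ : 0 ≤ w.2.1.1 ∧ 0 ≤ w.2.1.2 := hx
    obtain ⟨hy₁, hy₂⟩ : 0 ≤ w.2.2.1 ∧ 0 ≤ w.2.2.2 := hy
    rw [Function.comp_apply, Function.comp_apply,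
      ← ENNReal.ofReal_add (add_nonneg hx₁ hx₂) (add_nonneg hy₁ hy₂)]
    refine ENNReal.ofReal_le_ofReal ?_
    simp only [F, Prod.fst_add, Prod.snd_add, add_sub_add_left_eq_sub]
    have h₁ : |w.2.1.1 - w.2.2.1| ≤ w.2.1.1 + w.2.2.1 :=
      abs_sub_le_iff.2 (by constructor <;> linarith)
    have h₂ : |w.2.1.2 - w.2.2.2| ≤ w.2.1.2 + w.2.2.2 :=
      abs_sub_le_iff.2 (by constructor <;> linarith)
    linarith

end Coupling

section StateDifference

variable {x y : ℝ × ℝ}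

lemma inf_mem_Mset (hx : x ∈ Mset) (hy : y ∈ Mset) : x ⊓ y ∈ Mset := by
  obtain ⟨hx₁, m, hm⟩ := hx
  obtain ⟨hy₁, n, hn⟩ := hy
  exact ⟨le_inf hx₁ hy₁, min m n, by simp [hm, hn]⟩

lemma sub_inf_mem_Mset (hx : x ∈ Mset) (hy : y ∈ Mset) : x - x ⊓ y ∈ Mset := by
  obtain ⟨-, m, hm⟩ := hx
  obtain ⟨-, n, hn⟩ := hy
  exact ⟨sub_nonneg.2 inf_le_left, m - min m n, by
    simp [hm, hn, Nat.cast_sub (min_le_left m n)]⟩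

lemma sub_min_add_sub_min (a b : ℝ) : a - min a b + (b - min b a) = |a - b| := by
  rw [min_comm b a, ← max_sub_min_eq_abs']
  linarith [min_add_max a b]

lemma sub_inf_add_sub_inf_le (x y : ℝ × ℝ) :
    (x - x ⊓ y).1 + (x - x ⊓ y).2 + ((y - y ⊓ x).1 + (y - y ⊓ x).2) ≤
      2 * Real.sqrt ((x.1 - y.1) ^ 2 + (x.2 - y.2) ^ 2) := by
  have h₁ := Real.abs_le_sqrt
    (le_add_of_nonneg_right (a := (x.1 - y.1) ^ 2) (sq_nonneg (x.2 - y.2)))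
  have h₂ := Real.abs_le_sqrt (le_add_of_nonneg_left (a := (x.2 - y.2) ^ 2) (sq_nonneg (x.1 - y.1)))
  rw [← sub_min_add_sub_min] at h₁ h₂
  simp only [Prod.fst_sub, Prod.snd_sub, Prod.fst_inf, Prod.snd_inf]
  linarith

end StateDifference

section Ergodicity

lemma ae_nonneg_of_compl_Mset {μ : Measure (ℝ × ℝ)} (hμ : μ Msetᶜ = 0) : ∀ᵐ z ∂μ, 0 ≤ z := by
  have hmem : ∀ᵐ z ∂μ, z ∈ Mset := hμ
  filter_upwards [hmem] with z hz using nonneg_of_mem_Mset hz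

lemma exists_conv_increment_eq {B : BranchingMechanism} {V : ℝ → ℝ × ℝ → ℝ × ℝ}
    (hV : ∀ l : ℝ × ℝ, 0 ≤ l.1 → 0 ≤ l.2 → SolvesCumulant B l (fun t => V t l)) {t K : ℝ}
    (ht : 0 ≤ t) (hK : ∀ l : ℝ × ℝ, 0 ≤ l → (V t l).1 + (V t l).2 ≤ K * (l.1 + l.2))
    {γ : ℝ × ℝ → ℝ} {P : ℝ × ℝ → Measure (ℝ × ℝ)}
    (hP : ∀ x ∈ Mset, IsProbabilityMeasure (P x) ∧ P x Msetᶜ = 0 ∧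
      ∀ l : ℝ × ℝ, 0 ≤ l.1 → 0 ≤ l.2 → ∫ y, Real.exp (-(l.1 * y.1 + l.2 * y.2)) ∂(P x) =
        Real.exp (-(x.1 * (V t l).1 + x.2 * (V t l).2) - γ l))
    {x y : ℝ × ℝ} (hx : x ∈ Mset) (hy : y ∈ Mset) :
    ∃ X : Measure (ℝ × ℝ), IsProbabilityMeasure X ∧ (∀ᵐ z ∂X, 0 ≤ z) ∧ P (x ⊓ y) ∗ X = P x ∧
      ∫⁻ z, ENNReal.ofReal (z.1 + z.2) ∂X ≤
        ENNReal.ofReal (2 * (K * ((x - x ⊓ y).1 + (x - x ⊓ y).2))) := by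
  obtain ⟨X, hX, hX0, hXl, hXm⟩ := SolvesCumulant.exists_increment_law hV ht hK
    (sub_inf_mem_Mset hx hy)
  obtain ⟨hPx, hPx0, hPxl⟩ := hP x hx
  obtain ⟨hPi, hPi0, hPil⟩ := hP (x ⊓ y) (inf_mem_Mset hx hy)
  refine ⟨X, hX, hX0, eq_conv_of_laplaceTransform_eq_mul (ae_nonneg_of_compl_Mset hPi0) hX0
    (ae_nonneg_of_compl_Mset hPx0) fun l hl => ?_, hXm⟩
  rw [hXl l hl, laplaceTransform, laplaceTransform, hPxl l hl.1 hl.2, hPil l hl.1 hl.2,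
    ← Real.exp_add, Prod.fst_sub, Prod.snd_sub]
  ring_nf

/-- `Γ t l` plays the role of `∫₀ᵗ Ψ(V(s, l)) ds`; being the same for all starting points, it
belongs to the common factor of the laws `P t x`. -/
theorem exponential_ergodicity_MSBI_general (B : BranchingMechanism) (V : ℝ → (ℝ × ℝ) → ℝ × ℝ)
    (hV : ∀ l : ℝ × ℝ, 0 ≤ l.1 → 0 ≤ l.2 → SolvesCumulant B l (fun t => V t l))
    (Γ : ℝ → ℝ × ℝ → ℝ) (P : ℝ → (ℝ × ℝ) → Measure (ℝ × ℝ))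
    (hP : ∀ t : ℝ, 0 ≤ t → ∀ x ∈ Mset, IsProbabilityMeasure (P t x) ∧ P t x Msetᶜ = 0 ∧
      ∀ l : ℝ × ℝ, 0 ≤ l.1 → 0 ≤ l.2 → ∫ y, Real.exp (-(l.1 * y.1 + l.2 * y.2)) ∂(P t x) =
        Real.exp (-(x.1 * (V t l).1 + x.2 * (V t l).2) - Γ t l))
    (hdet : H11 B * H22 B - H12 B * H21 B > 0) (htr : H11 B + H22 B < 0) :
    ∃ lam : ℝ, 0 < lam ∧ ∃ θ : ℝ, 0 < θ ∧ ∀ t : ℝ, 0 ≤ t → ∀ x ∈ Mset, ∀ y ∈ Mset,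
      ∃ Pc : Measure ((ℝ × ℝ) × (ℝ × ℝ)), IsCoupling Pc (P t x) (P t y) ∧
        ∫⁻ w, ENNReal.ofReal (|w.1.1 - w.2.1| + |w.1.2 - w.2.2|) ∂Pc ≤
          ENNReal.ofReal (θ * Real.sqrt ((x.1 - y.1) ^ 2 + (x.2 - y.2) ^ 2) *
            Real.exp (-lam * t)) := by
  obtain ⟨κ, C, hκ, hC, hdecay⟩ := exists_cumulant_add_le_mul_exp hdet htr
  refine ⟨κ, hκ, 4 * C, by positivity, fun t ht x hx y hy => ?_⟩
  have hK (l : ℝ × ℝ) (hl : 0 ≤ l) := hdecay l _ hl (hV l hl.1 hl.2) t ht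
  obtain ⟨X, hX, hX0, hPx, hXm⟩ := exists_conv_increment_eq hV ht hK (hP t ht) hx hy
  obtain ⟨Y, hY, hY0, hPy, hYm⟩ := exists_conv_increment_eq hV ht hK (hP t ht) hy hx
  have hPi := (hP t ht _ (inf_mem_Mset hx hy)).1
  obtain ⟨Pc, hPc, hcost⟩ := exists_coupling_conv (P t (x ⊓ y)) X Y hX0 hY0
  rw [hPx, inf_comm, hPy] at hPc
  have hsum {u : ℝ × ℝ} (hu : u ∈ Mset) : 0 ≤ 2 * (C * Real.exp (-κ * t) * (u.1 + u.2)) :=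
    mul_nonneg zero_le_two (mul_nonneg (by positivity)
      (add_nonneg (nonneg_of_mem_Mset hu).1 (nonneg_of_mem_Mset hu).2))
  refine ⟨Pc, hPc, hcost.trans ((add_le_add hXm hYm).trans ?_)⟩
  rw [← ENNReal.ofReal_add (hsum (sub_inf_mem_Mset hx hy)) (hsum (sub_inf_mem_Mset hy hx)),
    ← mul_add, ← mul_add]
  refine ENNReal.ofReal_le_ofReal ?_
  calc _ ≤ 2 * (C * Real.exp (-κ * t) * (2 * Real.sqrt ((x.1 - y.1) ^ 2 + (x.2 - y.2) ^ 2))) := by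
        gcongr
        exact sub_inf_add_sub_inf_le x y
    _ = _ := by ring

end Ergodicity

/-- Exponential ergodicity in the `L¹`-Wasserstein distance for the
MSBI-process: if `det H > 0` and `trace H < 0`, there are `λ, ϑ > 0` such that for
all `t ≥ 0` and `x, y ∈ 𝕄` some coupling of `P^γ_t(x,·)` and `P^γ_t(y,·)` has cost
at most `ϑ |x-y| e^{-λt}`. -/
theorem exponential_ergodicity_MSBI (B : BranchingMechanism)
    (V : ℝ → (ℝ × ℝ) → ℝ × ℝ)
    (hV : ∀ l : ℝ × ℝ, 0 ≤ l.1 → 0 ≤ l.2 → SolvesCumulant B l (fun t => V t l))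
    (b : ℝ) (hb : 0 < b) (m : Measure (ℝ × ℝ))
    (hm : IsImmigrationMeasure m)
    -- `∫ (z₁ + z₂) m(dz) < ∞`
    (hm_moment : ∫⁻ z, ENNReal.ofReal (z.1 + z.2) ∂m ≠ ⊤)
    (P : ℝ → (ℝ × ℝ) → Measure (ℝ × ℝ))
    (hP : IsMSBITransition V b m P)
    (hdet : H11 B * H22 B - H12 B * H21 B > 0)
    (htr : H11 B + H22 B < 0) :
    ∃ lam : ℝ, 0 < lam ∧ ∃ θ : ℝ, 0 < θ ∧
      ∀ t : ℝ, 0 ≤ t → ∀ x ∈ Mset, ∀ y ∈ Mset,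
        ∃ Pc : Measure ((ℝ × ℝ) × (ℝ × ℝ)), IsCoupling Pc (P t x) (P t y) ∧
          ∫⁻ w, ENNReal.ofReal (|w.1.1 - w.2.1| + |w.1.2 - w.2.2|) ∂Pc
            ≤ ENNReal.ofReal
                (θ * Real.sqrt ((x.1 - y.1) ^ 2 + (x.2 - y.2) ^ 2) *
                  Real.exp (-lam * t)) :=
  exponential_ergodicity_MSBI_general B V hV (fun t l => ∫ s in (0:ℝ)..t, mPsi b m (V s l)) P hP
    hdet htr
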